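/- arXiv:2002.10978 — 2 statements merged into one kernel-verified Lean document; each statement's English description precedes it below -/
import Mathlib

section
/- For real t > 0 and 0 < α ≤ 1, 0 < αγ ≤ β ≤ 1, the function t ↦ t^{β-1} E_{α,β}^γ(-t^α) is completely monotonic on (0, ∞): it is infinitely differentiable and (-1)^k (d^k/dt^k)[t^{β-1} E_{α,β}^γ(-t^α)] ≥ 0 for all k ≥ 0 and t > 0. -/
open scoped BigOperators

/-- Pochhammer symbol `(γ)_k = γ(γ+1)⋯(γ+k-1)`. -/
noncomputable def poch (γ : ℝ) (k : ℕ) : ℝ := ∏ i ∈ Finset.range k, (γ + i)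

/-- The real-argument Prabhakar function `E_{α,β}^γ(x)`. -/
noncomputable def prabhakarR (α β γ : ℝ) (x : ℝ) : ℝ :=
  ∑' k : ℕ, poch γ k * x ^ k / (Nat.factorial k * Real.Gamma (α * k + β))

/-!
By Euler's limit formula, `Γ(k + γ) / Γ(αk + β)` is the limit as `n → ∞` of
`n ^ (γ - β) * (n ^ (1 - α)) ^ k * ∏ j ≤ n, (αk + β + j) / (k + γ + j)`. Each factor is
`α + (β + j - α(γ + j)) / (k + γ + j)` with a nonnegative numerator, and `1 / (k + a)` is the `k`-th
moment of `s ^ (a - 1) ds` on `[0, 1]`. As Stieltjes moment sequences form a closed subsemiring of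
`ℕ → ℝ`, the limit is one as well: formally, `E(-x)` is a positive mixture of exponentials
`exp (-s * x)`, and `t ↦ exp (-s * t ^ α)` is completely monotone because `t ^ α` is a Bernstein
function. No mixing measure has to be constructed: for finite mixtures the alternating Taylor
partial sums of the exponential enclose the function, so pointwise convergence of the moments
already forces convergence of the functions.
-/

open Filter Set Topology

theorem apply_add_le_of_hasDerivAt_nonpos {f f' : ℝ → ℝ} {a t h : ℝ}
    (hderiv : ∀ t, a < t → HasDerivAt f (f' t) t) (hf' : ∀ t, a < t → f' t ≤ 0)
    (ht : a < t) (hh : 0 ≤ h) : f (t + h) ≤ f t := by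
  have hanti : AntitoneOn f (Ioi a) := by
    refine antitoneOn_of_hasDerivWithinAt_nonpos (f' := f') (convex_Ioi a)
      (fun t ht => (hderiv t ht).continuousAt.continuousWithinAt) ?_ ?_ <;> rw [interior_Ioi]
    exacts [fun t ht => (hderiv t ht).hasDerivWithinAt, hf']
  exact hanti ht (ht.trans_le (le_add_of_nonneg_right hh)) (le_add_of_nonneg_right hh)

/-- Complete monotonicity on `(0, ∞)` up to order `n`, i.e. nonnegativity of the alternating
iterated differences of `f` of order at most `n`. Stating it through differences rather than
derivatives makes it stable under pointwise limits. Values of `f` outside `(0, ∞)` are ignored. -/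
def CompletelyMonotoneUpTo : ℕ → (ℝ → ℝ) → Prop
  | 0, f => ∀ t, 0 < t → 0 ≤ f t
  | n + 1, f => (∀ t, 0 < t → 0 ≤ f t) ∧
      ∀ h, 0 < h → CompletelyMonotoneUpTo n (fun t => f t - f (t + h))

namespace CompletelyMonotoneUpTo

variable {n : ℕ} {f g : ℝ → ℝ}

theorem nonneg (hf : CompletelyMonotoneUpTo n f) : ∀ t, 0 < t → 0 ≤ f t := by
  cases n with
  | zero => exact hf
  | succ n => exact hf.1

theorem of_succ (hf : CompletelyMonotoneUpTo (n + 1) f) : CompletelyMonotoneUpTo n f := by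
  induction n generalizing f with
  | zero => exact hf.1
  | succ n ih => exact ⟨hf.1, fun h hh => ih (hf.2 h hh)⟩

theorem of_tendsto {ι : Type*} {l : Filter ι} [l.NeBot] {F : ι → ℝ → ℝ}
    (hF : ∀ᶠ i in l, CompletelyMonotoneUpTo n (F i))
    (hlim : ∀ t, 0 < t → Tendsto (fun i => F i t) l (𝓝 (f t))) : CompletelyMonotoneUpTo n f := by
  induction n generalizing F f with
  | zero => exact fun t ht => ge_of_tendsto (hlim t ht) (hF.mono fun i hi => hi t ht)
  | succ n ih =>
    exact ⟨fun t ht => ge_of_tendsto (hlim t ht) (hF.mono fun i hi => hi.1 t ht), fun h hh =>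
      ih (hF.mono fun i hi => hi.2 h hh)
        fun t ht => (hlim t ht).sub (hlim (t + h) (by positivity))⟩

theorem congr (hf : CompletelyMonotoneUpTo n f) (hfg : ∀ t, 0 < t → f t = g t) :
    CompletelyMonotoneUpTo n g :=
  of_tendsto (l := pure ()) (F := fun _ => f) (eventually_pure.2 hf) fun t ht =>
    hfg t ht ▸ tendsto_const_nhds

theorem comp_add_const {s : ℝ} (hs : 0 ≤ s) (hf : CompletelyMonotoneUpTo n f) :
    CompletelyMonotoneUpTo n (fun t => f (t + s)) := by
  induction n generalizing f with
  | zero => exact fun t ht => hf (t + s) (by positivity)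
  | succ n ih =>
    exact ⟨fun t ht => hf.1 (t + s) (by positivity), fun h hh =>
      (ih (hf.2 h hh)).congr fun t _ => by rw [add_right_comm]⟩

theorem const {c : ℝ} (hc : 0 ≤ c) : CompletelyMonotoneUpTo n (fun _ => c) := by
  induction n generalizing c with
  | zero => exact fun _ _ => hc
  | succ n ih => exact ⟨fun _ _ => hc, fun _ _ => (ih le_rfl).congr fun _ _ => (sub_self c).symm⟩

theorem add (hf : CompletelyMonotoneUpTo n f) (hg : CompletelyMonotoneUpTo n g) :
    CompletelyMonotoneUpTo n (fun t => f t + g t) := by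
  induction n generalizing f g with
  | zero => exact fun t ht => add_nonneg (hf t ht) (hg t ht)
  | succ n ih =>
    exact ⟨fun t ht => add_nonneg (hf.1 t ht) (hg.1 t ht), fun h hh =>
      (ih (hf.2 h hh) (hg.2 h hh)).congr fun t _ => by ring⟩

theorem mul (hf : CompletelyMonotoneUpTo n f) (hg : CompletelyMonotoneUpTo n g) :
    CompletelyMonotoneUpTo n (fun t => f t * g t) := by
  induction n generalizing f g with
  | zero => exact fun t ht => mul_nonneg (hf t ht) (hg t ht)
  | succ n ih =>
    refine ⟨fun t ht => mul_nonneg (hf.1 t ht) (hg.1 t ht), fun h hh => ?_⟩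
    have leibniz (t : ℝ) : (f t - f (t + h)) * g t + f (t + h) * (g t - g (t + h)) =
        f t * g t - f (t + h) * g (t + h) := by ring
    exact ((ih (hf.2 h hh) hg.of_succ).add (ih (hf.of_succ.comp_add_const hh.le) (hg.2 h hh))).congr
      fun t _ => leibniz t

theorem pow (hf : CompletelyMonotoneUpTo n f) (m : ℕ) :
    CompletelyMonotoneUpTo n (fun t => f t ^ m) := by
  induction m with
  | zero => simpa only [pow_zero] using const zero_le_one
  | succ m ih => simpa only [pow_succ] using ih.mul hf

theorem of_hasDerivAt_neg (hf : ∀ t, 0 < t → 0 ≤ f t)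
    (hderiv : ∀ t, 0 < t → HasDerivAt f (-g t) t) (hg : CompletelyMonotoneUpTo n g) :
    CompletelyMonotoneUpTo (n + 1) f := by
  induction n generalizing f g with
  | zero =>
    exact ⟨hf, fun h hh t ht => sub_nonneg.2 <| apply_add_le_of_hasDerivAt_nonpos hderiv
      (fun t ht => neg_nonpos.2 (hg t ht)) ht hh.le⟩
  | succ n ih =>
    refine ⟨hf, fun h hh => ih (fun t ht => ?_) (fun t ht => ?_) (hg.2 h hh)⟩
    · exact sub_nonneg.2 <| apply_add_le_of_hasDerivAt_nonpos hderiv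
        (fun t ht => neg_nonpos.2 (hg.1 t ht)) ht hh.le
    · exact ((hderiv t ht).sub ((hderiv (t + h) (by positivity)).comp_add_const t h)).congr_deriv
        (by ring)

theorem rpow_neg {s : ℝ} (hs : 0 ≤ s) : CompletelyMonotoneUpTo n (fun t => t ^ (-s)) := by
  induction n generalizing s with
  | zero => exact fun t ht => Real.rpow_nonneg ht.le _
  | succ n ih =>
    refine of_hasDerivAt_neg (g := fun t => s * t ^ (-(s + 1)))
      (fun t ht => Real.rpow_nonneg ht.le _) (fun t ht => ?_)
      ((const hs).mul (ih (by positivity)))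
    refine (Real.hasDerivAt_rpow_const (Or.inl ht.ne')).congr_deriv ?_
    rw [neg_mul, neg_add' s 1]

theorem neg_derivWithin (hf : ∀ n, CompletelyMonotoneUpTo n f)
    (hd : DifferentiableOn ℝ f (Ioi 0)) (n : ℕ) :
    CompletelyMonotoneUpTo n (fun t => -derivWithin f (Ioi 0) t) := by
  refine of_tendsto (l := 𝓝[>] (0 : ℝ)) (F := fun h t => h⁻¹ * (f t - f (t + h))) ?_ fun t ht => ?_
  · filter_upwards [self_mem_nhdsWithin] with h hh
    exact (const (inv_nonneg.2 (le_of_lt hh))).mul ((hf (n + 1)).2 h hh)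
  · have hderiv := (hd t ht).hasDerivWithinAt.hasDerivAt (Ioi_mem_nhds ht)
    refine hderiv.tendsto_slope_zero_right.neg.congr fun h => ?_
    rw [smul_eq_mul, ← mul_neg, neg_sub]

theorem neg_one_pow_mul_iteratedDerivWithin (hf : ∀ n, CompletelyMonotoneUpTo n f)
    (hd : ContDiffOn ℝ (⊤ : ℕ∞) f (Ioi 0)) (k n : ℕ) :
    CompletelyMonotoneUpTo n (fun t => (-1 : ℝ) ^ k * iteratedDerivWithin k f (Ioi 0) t) := by
  induction k generalizing n with
  | zero => simpa using hf n
  | succ k ih =>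
    have hdiff : DifferentiableOn ℝ (iteratedDerivWithin k f (Ioi 0)) (Ioi 0) :=
      hd.differentiableOn_iteratedDerivWithin (by exact_mod_cast WithTop.coe_lt_top _)
        (uniqueDiffOn_Ioi 0)
    refine (neg_derivWithin ih (hdiff.const_mul _) n).congr fun t ht => ?_
    rw [iteratedDerivWithin_succ, derivWithin_const_mul _ (hdiff t ht), pow_succ, mul_neg_one,
      neg_mul]

end CompletelyMonotoneUpTo

/-- Bernstein functions on `(0, ∞)`: nonnegative functions with completely monotone increments.
For smooth functions this is the usual requirement that the derivative be completely monotone. -/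
structure IsBernstein (φ : ℝ → ℝ) : Prop where
  nonneg : ∀ t, 0 < t → 0 ≤ φ t
  increment : ∀ h, 0 < h → ∀ n, CompletelyMonotoneUpTo n (fun t => φ (t + h) - φ t)

namespace IsBernstein

variable {φ : ℝ → ℝ}

theorem of_hasDerivAt {g : ℝ → ℝ} (hφ : ∀ t, 0 < t → 0 ≤ φ t)
    (hderiv : ∀ t, 0 < t → HasDerivAt φ (g t) t) (hg : ∀ n, CompletelyMonotoneUpTo n g) :
    IsBernstein φ where
  nonneg := hφ
  increment h hh n := by
    refine (CompletelyMonotoneUpTo.of_hasDerivAt_neg (g := fun t => g t - g (t + h))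
      (fun t ht => ?_) (fun t ht => ?_) ((hg (n + 1)).2 h hh)).of_succ
    · exact sub_nonneg.2 <| neg_le_neg_iff.1 <| apply_add_le_of_hasDerivAt_nonpos
        (fun t ht => (hderiv t ht).neg) (fun t ht => neg_nonpos.2 ((hg 0).nonneg t ht)) ht hh.le
    · exact (((hderiv (t + h) (by positivity)).comp_add_const t h).sub (hderiv t ht)).congr_deriv
        (by ring)

theorem rpow {α : ℝ} (hα0 : 0 ≤ α) (hα1 : α ≤ 1) : IsBernstein (fun t => t ^ α) :=
  of_hasDerivAt (fun t ht => Real.rpow_nonneg ht.le α)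
    (fun t ht => Real.hasDerivAt_rpow_const (Or.inl ht.ne')) fun n =>
    (CompletelyMonotoneUpTo.const hα0).mul <| by
      simpa only [neg_sub] using CompletelyMonotoneUpTo.rpow_neg (sub_nonneg.2 hα1)

theorem inv_one_add_mul (hφ : IsBernstein φ) {c : ℝ} (hc : 0 ≤ c) (n : ℕ) :
    CompletelyMonotoneUpTo n (fun t => (1 + c * φ t)⁻¹) := by
  have hpos (t : ℝ) (ht : 0 < t) : 0 < 1 + c * φ t :=
    add_pos_of_pos_of_nonneg one_pos (mul_nonneg hc (hφ.nonneg t ht))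
  induction n with
  | zero => exact fun t ht => (inv_pos.2 (hpos t ht)).le
  | succ n ih =>
    refine ⟨fun t ht => (inv_pos.2 (hpos t ht)).le, fun h hh => ?_⟩
    refine (((CompletelyMonotoneUpTo.const hc).mul (hφ.increment h hh n)).mul
      (ih.mul (ih.comp_add_const hh.le))).congr fun t ht => ?_
    have hne := (hpos t ht).ne'
    have hne' := (hpos (t + h) (by positivity)).ne'
    field_simp
    ring

theorem exp_neg_mul (hφ : IsBernstein φ) {c : ℝ} (hc : 0 ≤ c) (n : ℕ) :
    CompletelyMonotoneUpTo n (fun t => Real.exp (-(c * φ t))) := by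
  refine CompletelyMonotoneUpTo.of_tendsto (l := (atTop : Filter ℕ))
    (F := fun m t => ((1 + c / m * φ t)⁻¹) ^ m)
    (Eventually.of_forall fun m => (hφ.inv_one_add_mul (by positivity) n).pow m) fun t _ => ?_
  rw [Real.exp_neg]
  refine ((Real.tendsto_one_add_div_pow_exp (c * φ t)).inv₀ (Real.exp_ne_zero _)).congr fun m => ?_
  rw [inv_pow, mul_div_right_comm]

end IsBernstein

theorem abs_exp_neg_sub_sum_range_le {y : ℝ} (hy : 0 ≤ y) (N : ℕ) :
    |Real.exp (-y) - ∑ k ∈ Finset.range N, (-y) ^ k / (k.factorial : ℝ)| ≤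
      y ^ N / (N.factorial : ℝ) := by
  rcases hy.eq_or_lt with rfl | hy
  · cases N <;> simp [Finset.sum_range_succ']
  cases N with
  | zero => simpa using hy.le
  | succ n =>
    obtain ⟨ξ, hξ, hrem⟩ := taylor_mean_remainder_lagrange_iteratedDeriv (f := Real.exp) (n := n)
      (neg_lt_zero.2 hy).ne' Real.contDiff_exp.contDiffOn
    have htaylor : taylorWithinEval Real.exp n (uIcc 0 (-y)) 0 (-y) =
        ∑ k ∈ Finset.range (n + 1), (-y) ^ k / (k.factorial : ℝ) := by
      rw [taylor_within_apply]
      refine Finset.sum_congr rfl fun k _ => ?_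
      rw [iteratedDerivWithin_eq_iteratedDeriv (uniqueDiffOn_uIcc (neg_lt_zero.2 hy).ne')
        Real.contDiff_exp.contDiffAt left_mem_uIcc, iteratedDeriv_eq_iterate, Real.iter_deriv_exp]
      simp [div_eq_inv_mul]
    have hξ0 : ξ ≤ 0 := by
      rw [uIoo_of_gt (neg_lt_zero.2 hy)] at hξ
      exact hξ.2.le
    rw [← htaylor, hrem, iteratedDeriv_eq_iterate, Real.iter_deriv_exp, sub_zero, abs_div,
      abs_mul, abs_pow, abs_neg, abs_of_pos hy, Real.abs_exp, Nat.abs_cast]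
    gcongr
    exact mul_le_of_le_one_left (by positivity) (Real.exp_le_one_iff.2 hξ0)

theorem tendsto_of_abs_sub_partialSum_le {ι : Type*} {l : Filter ι} {a : ι → ℕ → ℝ} {c y : ℕ → ℝ}
    {F : ι → ℝ} {s : ℝ} (ha : ∀ k, Tendsto (fun i => a i k) l (𝓝 (c k)))
    (hF : ∀ i N, |F i - ∑ k ∈ Finset.range N, a i k * y k| ≤ |a i N * y N|)
    (hs : HasSum (fun k => c k * y k) s) : Tendsto F l (𝓝 s) := by
  have hterm (k : ℕ) : Tendsto (fun i => a i k * y k) l (𝓝 (c k * y k)) := (ha k).mul_const _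
  have herr (N : ℕ) : Tendsto
      (fun i => |a i N * y N| + |∑ k ∈ Finset.range N, a i k * y k - s|) l
      (𝓝 (|c N * y N| + |∑ k ∈ Finset.range N, c k * y k - s|)) :=
    (hterm N).abs.add ((tendsto_finsetSum _ fun k _ => hterm k).sub_const s).abs
  have herr_zero : Tendsto (fun N => |c N * y N| + |∑ k ∈ Finset.range N, c k * y k - s|) atTop
      (𝓝 0) := by
    simpa using hs.summable.tendsto_atTop_zero.abs.add (hs.tendsto_sum_nat.sub_const s).abs
  refine Metric.tendsto_nhds.2 fun ε hε => ?_
  obtain ⟨N, hN⟩ := (herr_zero.eventually (gt_mem_nhds hε)).exists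
  filter_upwards [(herr N).eventually (gt_mem_nhds hN)] with i hi
  exact (abs_sub_le _ _ _).trans_lt ((add_le_add_left (hF i N) _).trans_lt hi)

/-- The sequences `k ↦ w * s ^ k` with `w, s ≥ 0`, i.e. the moments of the point masses `w δ_s`. -/
def pointMassMoments : Submonoid (ℕ → ℝ) where
  carrier := {c | ∃ w s : ℝ, 0 ≤ w ∧ 0 ≤ s ∧ c = fun k => w * s ^ k}
  one_mem' := ⟨1, 1, zero_le_one, zero_le_one, by ext; simp⟩
  mul_mem' := by
    rintro _ _ ⟨w, s, hw, hs, rfl⟩ ⟨v, r, hv, hr, rfl⟩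
    refine ⟨w * v, s * r, mul_nonneg hw hv, mul_nonneg hs hr, funext fun k => ?_⟩
    rw [Pi.mul_apply, mul_pow, mul_mul_mul_comm]

/-- The Stieltjes moment sequences `k ↦ ∫ s ^ k dμ(s)`, `μ` a positive measure on `[0, ∞)`, encoded
without measures: the pointwise closure of the moment sequences of finitely supported `μ`. -/
def stieltjesMoments : Subsemiring (ℕ → ℝ) :=
  pointMassMoments.subsemiringClosure.topologicalClosure

theorem mul_pow_mem_stieltjesMoments {w s : ℝ} (hw : 0 ≤ w) (hs : 0 ≤ s) :
    (fun k => w * s ^ k) ∈ stieltjesMoments :=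
  Subsemiring.le_topologicalClosure _ <|
    pointMassMoments.subsemiringClosure_mem.2 <| AddSubmonoid.subset_closure ⟨w, s, hw, hs, rfl⟩

theorem const_mem_stieltjesMoments {w : ℝ} (hw : 0 ≤ w) : (fun _ => w) ∈ stieltjesMoments := by
  simpa only [one_pow, mul_one] using mul_pow_mem_stieltjesMoments hw zero_le_one

theorem mem_stieltjesMoments_of_tendsto {ι : Type*} {l : Filter ι} [l.NeBot] {a : ι → ℕ → ℝ}
    {c : ℕ → ℝ} (ha : ∀ᶠ i in l, a i ∈ stieltjesMoments)
    (hlim : ∀ k, Tendsto (fun i => a i k) l (𝓝 (c k))) : c ∈ stieltjesMoments :=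
  (Subsemiring.isClosed_topologicalClosure _).mem_of_tendsto (tendsto_pi_nhds.2 hlim) ha

-- Up to the factor `δ`, the geometric series below is a Riemann sum of `∫ s ^ (k + a - 1) ds` over
-- the grid `s = exp (-(j * δ))` in `(0, 1]`.
theorem inv_one_sub_exp_mem_stieltjesMoments {a δ : ℝ} (ha : 0 < a) (hδ : 0 < δ) :
    (fun k : ℕ => (1 - Real.exp (-(δ * (k + a))))⁻¹) ∈ stieltjesMoments := by
  refine mem_stieltjesMoments_of_tendsto (l := atTop)
    (a := fun N k => ∑ j ∈ Finset.range N, Real.exp (-(δ * (k + a))) ^ j)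
    (Eventually.of_forall fun N => ?_) fun k => ?_
  · have hterm (j : ℕ) : (fun k : ℕ => Real.exp (-(δ * (k + a))) ^ j) =
        fun k => Real.exp (-(j * δ * a)) * Real.exp (-(j * δ)) ^ k := by
      ext k
      rw [← Real.exp_nat_mul, ← Real.exp_nat_mul, ← Real.exp_add]
      ring_nf
    have hsum := sum_mem (S := stieltjesMoments) (t := Finset.range N) fun j _ =>
      hterm j ▸ mul_pow_mem_stieltjesMoments (Real.exp_nonneg (-(j * δ * a)))
        (Real.exp_nonneg (-(j * δ)))
    simpa only [Finset.sum_fn] using hsum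
  · refine (hasSum_geometric_of_lt_one (Real.exp_nonneg _) ?_).tendsto_sum_nat
    rw [Real.exp_lt_one_iff, neg_lt_zero]
    positivity

theorem tendsto_mul_inv_one_sub_exp {x : ℝ} (hx : x ≠ 0) :
    Tendsto (fun δ : ℝ => δ * (1 - Real.exp (-(δ * x)))⁻¹) (𝓝[>] 0) (𝓝 x⁻¹) := by
  have hderiv : HasDerivAt (fun δ : ℝ => 1 - Real.exp (-(δ * x))) x 0 := by
    simpa using (((hasDerivAt_id (0 : ℝ)).mul_const x).neg.exp).const_sub 1
  refine (hderiv.tendsto_slope_zero_right.inv₀ hx).congr fun δ => ?_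
  simp [mul_comm]

theorem inv_add_mem_stieltjesMoments {a : ℝ} (ha : 0 < a) :
    (fun k : ℕ => ((k : ℝ) + a)⁻¹) ∈ stieltjesMoments := by
  refine mem_stieltjesMoments_of_tendsto (l := 𝓝[>] (0 : ℝ))
    (a := fun δ k => δ * (1 - Real.exp (-(δ * (k + a))))⁻¹) ?_
    fun k => tendsto_mul_inv_one_sub_exp (by positivity)
  filter_upwards [self_mem_nhdsWithin] with δ hδ
  exact mul_mem (const_mem_stieltjesMoments (le_of_lt hδ))
    (inv_one_sub_exp_mem_stieltjesMoments ha hδ)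

theorem linear_div_linear_mem_stieltjesMoments {a b m : ℝ} (ha : 0 < a) (hm : 0 ≤ m)
    (hmab : m * a ≤ b) : (fun k : ℕ => (m * k + b) / ((k : ℝ) + a)) ∈ stieltjesMoments := by
  have hdecomp : (fun k : ℕ => (m * k + b) / ((k : ℝ) + a)) =
      (fun _ => m) + (fun _ => b - m * a) * fun k : ℕ => ((k : ℝ) + a)⁻¹ := by
    ext k
    simp only [Pi.add_apply, Pi.mul_apply]
    have : (k : ℝ) + a ≠ 0 := by positivity
    field_simp
    ring
  rw [hdecomp]
  exact add_mem (const_mem_stieltjesMoments hm) (mul_mem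
    (const_mem_stieltjesMoments (sub_nonneg.2 hmab)) (inv_add_mem_stieltjesMoments ha))

theorem exists_completelyMonotone_enveloped {φ : ℝ → ℝ} (hφ : IsBernstein φ) {c : ℕ → ℝ}
    (hc : c ∈ pointMassMoments.subsemiringClosure) :
    ∃ f : ℝ → ℝ, (∀ n, CompletelyMonotoneUpTo n f) ∧ ∀ t, 0 < t → ∀ N,
      |f t - ∑ k ∈ Finset.range N, c k * ((-φ t) ^ k / (k.factorial : ℝ))| ≤
        c N * (φ t ^ N / (N.factorial : ℝ)) := by
  rw [pointMassMoments.subsemiringClosure_mem] at hc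
  induction hc using AddSubmonoid.closure_induction with
  | mem c hc =>
    obtain ⟨w, s, hw, hs, rfl⟩ := hc
    refine ⟨fun t => w * Real.exp (-(s * φ t)), fun n =>
      (CompletelyMonotoneUpTo.const hw).mul (hφ.exp_neg_mul hs n), fun t ht N => ?_⟩
    have hterm (k : ℕ) : w * s ^ k * ((-φ t) ^ k / (k.factorial : ℝ)) =
        w * ((-(s * φ t)) ^ k / (k.factorial : ℝ)) := by
      rw [← mul_neg, mul_pow]
      ring
    simp only [hterm, ← Finset.mul_sum, ← mul_sub, abs_mul, abs_of_nonneg hw]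
    calc w * |Real.exp (-(s * φ t)) -
          ∑ k ∈ Finset.range N, (-(s * φ t)) ^ k / (k.factorial : ℝ)|
        ≤ w * ((s * φ t) ^ N / (N.factorial : ℝ)) := by
          gcongr
          exact abs_exp_neg_sub_sum_range_le (mul_nonneg hs (hφ.nonneg t ht)) N
      _ = w * s ^ N * (φ t ^ N / (N.factorial : ℝ)) := by rw [mul_pow]; ring
  | zero =>
    exact ⟨fun _ => 0, fun n => CompletelyMonotoneUpTo.const le_rfl, fun t _ N => by simp⟩
  | add c d _ _ hc hd =>
    obtain ⟨f, hf, hfc⟩ := hc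
    obtain ⟨g, hg, hgd⟩ := hd
    refine ⟨fun t => f t + g t, fun n => (hf n).add (hg n), fun t ht N => ?_⟩
    simp only [Pi.add_apply, add_mul, Finset.sum_add_distrib, add_sub_add_comm]
    exact (abs_add_le _ _).trans (add_le_add (hfc t ht N) (hgd t ht N))

theorem CompletelyMonotoneUpTo.of_hasSum_stieltjesMoments {φ f : ℝ → ℝ} (hφ : IsBernstein φ)
    {c : ℕ → ℝ} (hc : c ∈ stieltjesMoments)
    (hf : ∀ t, 0 < t → HasSum (fun k => c k * ((-φ t) ^ k / (k.factorial : ℝ))) (f t)) (n : ℕ) :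
    CompletelyMonotoneUpTo n f := by
  obtain ⟨a, ha, hlim⟩ := mem_closure_iff_seq_limit.1 hc
  choose F hF hFa using fun i => exists_completelyMonotone_enveloped hφ (ha i)
  refine CompletelyMonotoneUpTo.of_tendsto (l := atTop) (Eventually.of_forall fun i => hF i n)
    fun t ht => ?_
  refine tendsto_of_abs_sub_partialSum_le (tendsto_pi_nhds.1 hlim) (fun i N => ?_) (hf t ht)
  refine (hFa i t ht N).trans ((le_abs_self _).trans_eq ?_)
  simp only [abs_mul, abs_div, abs_pow, abs_neg]

theorem poch_succ (γ : ℝ) (k : ℕ) : poch γ (k + 1) = poch γ k * (γ + k) :=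
  Finset.prod_range_succ _ k

theorem poch_ne_zero {γ : ℝ} (hγ : ∀ m : ℕ, γ ≠ -m) (k : ℕ) : poch γ k ≠ 0 :=
  Finset.prod_ne_zero_iff.2 fun j _ h => hγ j (eq_neg_of_add_eq_zero_left h)

theorem Gamma_natCast_add_eq_poch_mul {γ : ℝ} (hγ : ∀ m : ℕ, γ ≠ -m) (k : ℕ) :
    Real.Gamma (k + γ) = poch γ k * Real.Gamma γ := by
  induction k with
  | zero => simp [poch]
  | succ k ih =>
    have hne : γ + k ≠ 0 := fun h => hγ k (eq_neg_of_add_eq_zero_left h)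
    rw [Nat.cast_succ, add_right_comm, Real.Gamma_add_one (add_comm γ k ▸ hne), ih, poch_succ]
    ring

theorem GammaSeq_div_GammaSeq {α β γ : ℝ} (hα : 0 ≤ α) (hβ : 0 < β) (hγ : 0 < γ) {n : ℕ}
    (hn : 0 < n) (k : ℕ) :
    Real.GammaSeq (k + γ) n / Real.GammaSeq (α * k + β) n =
      (n : ℝ) ^ (γ - β) * ((n : ℝ) ^ (1 - α)) ^ k *
        ∏ j ∈ Finset.range (n + 1), (α * k + (β + j)) / (k + (γ + j)) := by
  have hn' : (0 : ℝ) < n := by exact_mod_cast hn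
  have hpow : (n : ℝ) ^ ((k : ℝ) + γ) =
      (n : ℝ) ^ (γ - β) * ((n : ℝ) ^ (1 - α)) ^ k * (n : ℝ) ^ (α * k + β) := by
    rw [← Real.rpow_natCast, ← Real.rpow_mul hn'.le, ← Real.rpow_add hn', ← Real.rpow_add hn']
    ring_nf
  have hnum : ∏ j ∈ Finset.range (n + 1), (α * k + (β + j)) ≠ 0 :=
    Finset.prod_ne_zero_iff.2 fun j _ => by positivity
  have hden : ∏ j ∈ Finset.range (n + 1), ((k : ℝ) + (γ + j)) ≠ 0 :=
    Finset.prod_ne_zero_iff.2 fun j _ => by positivity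
  simp only [Real.GammaSeq, add_assoc, Finset.prod_div_distrib] at hpow ⊢
  rw [hpow]
  field_simp

theorem Gamma_div_Gamma_mem_stieltjesMoments {α β γ : ℝ} (hα0 : 0 ≤ α) (hα1 : α ≤ 1) (hβ : 0 < β)
    (hγ : 0 < γ) (hαγβ : α * γ ≤ β) :
    (fun k : ℕ => Real.Gamma (k + γ) / Real.Gamma (α * k + β)) ∈ stieltjesMoments := by
  refine mem_stieltjesMoments_of_tendsto (l := atTop)
    (a := fun n k => Real.GammaSeq (k + γ) n / Real.GammaSeq (α * k + β) n) ?_ fun k =>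
    (Real.GammaSeq_tendsto_Gamma _).div (Real.GammaSeq_tendsto_Gamma _)
      (Real.Gamma_pos_of_pos (by positivity)).ne'
  filter_upwards [eventually_gt_atTop 0] with n hn
  have hfactor (j : ℕ) : (fun k : ℕ => (α * k + (β + j)) / ((k : ℝ) + (γ + j))) ∈
      stieltjesMoments := by
    refine linear_div_linear_mem_stieltjesMoments (by positivity) hα0 ?_
    rw [mul_add]
    exact add_le_add hαγβ (mul_le_of_le_one_left j.cast_nonneg hα1)
  have hprod := mul_mem
    (mul_pow_mem_stieltjesMoments (w := (n : ℝ) ^ (γ - β)) (s := (n : ℝ) ^ (1 - α))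
      (by positivity) (by positivity))
    (prod_mem (t := Finset.range (n + 1)) fun j _ => hfactor j)
  convert hprod using 1
  ext k
  rw [Pi.mul_apply, Finset.prod_apply, GammaSeq_div_GammaSeq hα0 hβ hγ hn]

theorem rpow_mul_Gamma_le_Gamma_add {a y : ℝ} (ha : 0 < a) (hy : 1 < y) :
    (y - 1) ^ a * Real.Gamma y ≤ Real.Gamma (y + a) := by
  have hy1 : 0 < y - 1 := sub_pos.2 hy
  have hy0 : 0 < y := one_pos.trans hy
  have hG := Real.Gamma_pos_of_pos hy1
  have hrec : Real.log (Real.Gamma y) = Real.log (y - 1) + Real.log (Real.Gamma (y - 1)) := by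
    rw [← Real.log_mul hy1.ne' hG.ne', ← Real.Gamma_add_one hy1.ne', sub_add_cancel]
  have hslope := Real.convexOn_log_Gamma.slope_mono_adjacent (mem_Ioi.2 hy1)
    (mem_Ioi.2 (add_pos hy0 ha)) (sub_one_lt y) (lt_add_of_pos_right y ha)
  simp only [Function.comp_apply, hrec, sub_sub_cancel, div_one, add_sub_cancel_left,
    add_sub_cancel_right] at hslope
  rw [le_div_iff₀ ha, ← hrec] at hslope
  rw [← Real.log_le_log_iff (mul_pos (Real.rpow_pos_of_pos hy1 a) (Real.Gamma_pos_of_pos hy0))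
    (Real.Gamma_pos_of_pos (add_pos hy0 ha)), Real.log_mul (by positivity)
    (Real.Gamma_pos_of_pos hy0).ne', Real.log_rpow hy1]
  linarith

theorem tendsto_Gamma_div_Gamma_add {a : ℝ} (ha : 0 < a) :
    Tendsto (fun y => Real.Gamma y / Real.Gamma (y + a)) atTop (𝓝 0) := by
  have hbound : Tendsto (fun y : ℝ => (y - 1) ^ (-a)) atTop (𝓝 0) :=
    (tendsto_rpow_neg_atTop ha).comp (tendsto_atTop_add_const_right _ (-1) tendsto_id)
  refine squeeze_zero' ?_ ?_ hbound <;> filter_upwards [eventually_gt_atTop 1] with y hy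
  · have hy0 : 0 < y := one_pos.trans hy
    exact div_nonneg (Real.Gamma_nonneg_of_nonneg hy0.le)
      (Real.Gamma_nonneg_of_nonneg (by positivity))
  · have hy1 : 0 < y - 1 := sub_pos.2 hy
    rw [div_le_iff₀ (Real.Gamma_pos_of_pos (by linarith)), Real.rpow_neg hy1.le,
      le_inv_mul_iff₀ (Real.rpow_pos_of_pos hy1 a)]
    exact rpow_mul_Gamma_le_Gamma_add ha hy

/-- The Taylor series of `E_{α,β}^γ` at the origin. -/
noncomputable def prabhakarSeries (α β γ : ℝ) : FormalMultilinearSeries ℝ ℝ ℝ :=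
  .ofScalars ℝ fun k => poch γ k / ((k.factorial : ℝ) * Real.Gamma (α * k + β))

theorem prabhakarSeries_radius_eq_top {α β γ : ℝ} (hα : 0 < α) (hγ : ∀ m : ℕ, γ ≠ -m) :
    (prabhakarSeries α β γ).radius = ⊤ := by
  have hy : Tendsto (fun k : ℕ => α * (k : ℝ) + β) atTop atTop :=
    tendsto_atTop_add_const_right _ β (tendsto_natCast_atTop_atTop.const_mul_atTop hα)
  have hΓ : ∀ᶠ k : ℕ in atTop, Real.Gamma (α * k + β) ≠ 0 :=
    (hy.eventually_gt_atTop 0).mono fun k hk => (Real.Gamma_pos_of_pos hk).ne'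
  refine FormalMultilinearSeries.ofScalars_radius_eq_top_of_tendsto ℝ _
    (hΓ.mono fun k hk => div_ne_zero (poch_ne_zero hγ k) (mul_ne_zero (by positivity) hk)) ?_
  have hratio : Tendsto (fun k : ℕ => (γ + k) / (k + 1) *
      (Real.Gamma (α * k + β) / Real.Gamma (α * k + β + α))) atTop (𝓝 0) := by
    simpa [add_comm] using (tendsto_add_mul_div_add_mul_atTop_nhds γ 1 1 one_ne_zero).mul
      ((tendsto_Gamma_div_Gamma_add hα).comp hy)
  refine (tendsto_zero_iff_norm_tendsto_zero.1 hratio).congr fun k => ?_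
  have hpoch := poch_ne_zero hγ k
  have harg : α * (k + 1 : ℕ) + β = α * k + β + α := by
    push_cast
    ring
  rw [← norm_div, poch_succ, Nat.factorial_succ, harg]
  push_cast
  field_simp

theorem prabhakarR_hasFPowerSeriesOnBall {α β γ : ℝ} (hα : 0 < α) (hγ : ∀ m : ℕ, γ ≠ -m) :
    HasFPowerSeriesOnBall (prabhakarR α β γ) (prabhakarSeries α β γ) 0 ⊤ := by
  have hsum : (prabhakarSeries α β γ).sum = prabhakarR α β γ := by
    ext x
    refine (FormalMultilinearSeries.ofScalars_sum_eq _ x).trans (tsum_congr fun k => ?_)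
    rw [smul_eq_mul, div_mul_eq_mul_div]
  have hradius := prabhakarSeries_radius_eq_top (β := β) hα hγ
  simpa only [hsum, hradius] using
    (prabhakarSeries α β γ).hasFPowerSeriesOnBall (hradius ▸ ENNReal.zero_lt_top)

theorem prabhakarR_contDiff {α β γ : ℝ} (hα : 0 < α) (hγ : ∀ m : ℕ, γ ≠ -m) :
    ContDiff ℝ (⊤ : ℕ∞) (prabhakarR α β γ) :=
  AnalyticOnNhd.contDiff <| by
    simpa using (prabhakarR_hasFPowerSeriesOnBall hα hγ).analyticOnNhd

theorem hasSum_prabhakarR {α β γ : ℝ} (hα : 0 < α) (hγ : ∀ m : ℕ, γ ≠ -m) (x : ℝ) :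
    HasSum (fun k : ℕ => poch γ k / Real.Gamma (α * k + β) * (x ^ k / (k.factorial : ℝ)))
      (prabhakarR α β γ x) := by
  have hterm (k : ℕ) : prabhakarSeries α β γ k (fun _ => x) =
      poch γ k / Real.Gamma (α * k + β) * (x ^ k / (k.factorial : ℝ)) := by
    rw [prabhakarSeries, FormalMultilinearSeries.ofScalars_apply_eq, smul_eq_mul]
    field_simp
  simpa only [hterm, zero_add] using
    (prabhakarR_hasFPowerSeriesOnBall (β := β) hα hγ).hasSum (y := x) (by simp)

theorem CompletelyMonotoneUpTo.prabhakarR_neg {α β γ : ℝ} {φ : ℝ → ℝ} (hφ : IsBernstein φ)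
    (hα0 : 0 < α) (hα1 : α ≤ 1) (hγ : 0 < γ) (hαγβ : α * γ ≤ β) (n : ℕ) :
    CompletelyMonotoneUpTo n (fun t => prabhakarR α β γ (-φ t)) := by
  have hγ_ne (m : ℕ) : γ ≠ -m := ((neg_nonpos.2 m.cast_nonneg).trans_lt hγ).ne'
  refine .of_hasSum_stieltjesMoments hφ ?_ (fun t _ => hasSum_prabhakarR hα0 hγ_ne (-φ t)) n
  have hΓ := Real.Gamma_pos_of_pos hγ
  convert mul_mem (const_mem_stieltjesMoments (inv_nonneg.2 hΓ.le))
    (Gamma_div_Gamma_mem_stieltjesMoments hα0.le hα1 ((mul_pos hα0 hγ).trans_le hαγβ) hγ hαγβ)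
    using 1
  ext k
  rw [Pi.mul_apply, Gamma_natCast_add_eq_poch_mul hγ_ne]
  field_simp

/-- For `0 < α ≤ 1` and `0 < αγ ≤ β ≤ 1`, the function `t ↦ t^{β-1} E_{α,β}^γ(-t^α)` is
completely monotonic on `(0, ∞)`: it is infinitely differentiable there and
`(-1)^k f^{(k)}(t) ≥ 0` for all `k ≥ 0` and `t > 0`. -/
theorem prabhakar_kernel_completelyMonotone (α β γ : ℝ)
    (hα0 : 0 < α) (hα1 : α ≤ 1) (hγ : 0 < α * γ) (hγβ : α * γ ≤ β) (hβ : β ≤ 1) :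
    ContDiffOn ℝ (⊤ : ℕ∞) (fun t : ℝ => t ^ (β - 1) * prabhakarR α β γ (-(t ^ α)))
      (Set.Ioi (0 : ℝ)) ∧
    ∀ k : ℕ, ∀ t ∈ Set.Ioi (0 : ℝ),
      0 ≤ (-1 : ℝ) ^ k *
        iteratedDerivWithin k (fun t : ℝ => t ^ (β - 1) * prabhakarR α β γ (-(t ^ α)))
          (Set.Ioi (0 : ℝ)) t := by
  have hγ0 : 0 < γ := (mul_pos_iff_of_pos_left hα0).1 hγ
  have hrpow (p : ℝ) : ContDiffOn ℝ (⊤ : ℕ∞) (fun t : ℝ => t ^ p) (Ioi 0) := fun t ht =>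
    (Real.contDiffAt_rpow_const_of_ne (ne_of_gt ht)).contDiffWithinAt
  have hsmooth : ContDiffOn ℝ (⊤ : ℕ∞)
      (fun t : ℝ => t ^ (β - 1) * prabhakarR α β γ (-(t ^ α))) (Ioi 0) :=
    (hrpow _).mul <| (prabhakarR_contDiff hα0 fun m =>
      ((neg_nonpos.2 m.cast_nonneg).trans_lt hγ0).ne').comp_contDiffOn (hrpow _).neg
  have hpower (n : ℕ) : CompletelyMonotoneUpTo n (fun t => t ^ (β - 1)) := by
    simpa only [neg_sub] using CompletelyMonotoneUpTo.rpow_neg (sub_nonneg.2 hβ)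
  have hkernel (n : ℕ) := (hpower n).mul <|
    CompletelyMonotoneUpTo.prabhakarR_neg (IsBernstein.rpow hα0.le hα1) hα0 hα1 hγ0 hγβ n
  exact ⟨hsmooth, fun k =>
    (CompletelyMonotoneUpTo.neg_one_pow_mul_iteratedDerivWithin hkernel hsmooth k 0).nonneg⟩
end

section
/- The Mellin transform of E_{α,β}^γ(-t) on (0, ∞) is Γ(s)Γ(γ-s)/(Γ(γ)Γ(β-αs)): for 0 < Re(s) < γ, and parameters 0 < α < 1, 0 < αγ ≤ β ≤ 1 (ensuring integrability), ∫_0^∞ E_{α,β}^γ(-t) t^{s-1} dt = Γ(s)Γ(γ-s)/(Γ(γ)Γ(β-αs)). -/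
open scoped BigOperators

/-!
With `ζ = exp w`, the function `E_{α,β}^γ(-t)` is the inverse Laplace transform
`(2πi)⁻¹ ∫ e^ζ ζ^(αγ-β) (ζ^α + t)^(-γ) dζ` along a Hankel contour: far from the origin this is the
binomial series integrated termwise by Hankel's formula for `1 / Γ`, and the contour can be moved
as long as `ζ^α` stays in the right half-plane, which is possible since `α < 1`. On such a contour
the Mellin integral in `t` may be taken first. It is the beta integral
`∫ t^(s-1) (1 + c t)^(-γ) dt = c^(-s) Γ(s) Γ(γ-s) / Γ(γ)` with `c = ζ^(-α)`, and Hankel's formula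
evaluates the remaining integral of `e^ζ ζ^(αs-β)`.
-/

open Complex MeasureTheory Set Filter Topology
open Real (pi_pos)

section ParametricIntegral

variable {X E : Type*} [MeasurableSpace X] {μ : Measure X} [NormedAddCommGroup E]
  [NormedSpace ℂ E] {F : ℂ → X → E}

theorem aestronglyMeasurable_deriv_parameter {z : ℂ}
    (hF_meas : ∀ᶠ v in 𝓝 z, AEStronglyMeasurable (F v) μ)
    (hF_diff : ∀ᵐ x ∂μ, DifferentiableAt ℂ (F · x) z) :
    AEStronglyMeasurable (fun x => deriv (F · x) z) μ := by
  let u : ℕ → ℂ := fun n => z + 1 / ((n : ℂ) + 1)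
  have hu : Tendsto u atTop (𝓝 z) := by
    simpa [u] using (tendsto_one_div_add_atTop_nhds_zero_nat (𝕜 := ℂ)).const_add z
  have hu_ne (n : ℕ) : u n ≠ z := by simpa [u] using Nat.cast_add_one_ne_zero n
  obtain ⟨N, hN⟩ := eventually_atTop.1 (hu.eventually hF_meas)
  refine aestronglyMeasurable_of_tendsto_ae (u := atTop)
    (f := fun n x => slope (F · x) z (u (n + N))) (fun n => ?_) ?_
  · exact ((hN _ (Nat.le_add_left N n)).sub hF_meas.self_of_nhds).const_smul (u (n + N) - z)⁻¹
  · filter_upwards [hF_diff] with x hx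
    exact hx.hasDerivAt.tendsto_slope.comp (tendsto_nhdsWithin_iff.2
      ⟨hu.comp (tendsto_add_atTop_nat N), Eventually.of_forall fun n => hu_ne _⟩)

theorem differentiableOn_integral_of_locally_dominated {U : Set ℂ} (hU : IsOpen U)
    (hF_meas : ∀ z ∈ U, AEStronglyMeasurable (F z) μ)
    (hF_diff : ∀ᵐ x ∂μ, DifferentiableOn ℂ (F · x) U)
    (hF_le : ∀ z ∈ U, ∃ V ∈ 𝓝 z, ∃ bound : X → ℝ, Integrable bound μ ∧
      ∀ᵐ x ∂μ, ∀ v ∈ V, ‖F v x‖ ≤ bound x) :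
    DifferentiableOn ℂ (fun z => ∫ x, F z x ∂μ) U := by
  intro z hz
  have hUz : U ∈ 𝓝 z := hU.mem_nhds hz
  obtain ⟨V, hV, bound, hbound, hF_le⟩ := hF_le z hz
  obtain ⟨r, hr, hball⟩ := Metric.mem_nhds_iff.1 (inter_mem hV hUz)
  have hclosed : ∀ v ∈ Metric.ball z (r / 2), Metric.closedBall v (r / 2) ⊆ V ∩ U := by
    intro v hv u hu
    refine hball ?_
    rw [Metric.mem_ball] at hv ⊢
    rw [Metric.mem_closedBall] at hu
    linarith [dist_triangle u v z]
  have hF_meas' : ∀ᶠ v in 𝓝 z, AEStronglyMeasurable (F v) μ := mem_of_superset hUz hF_meas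
  have hF_int : Integrable (F z) μ := by
    refine hbound.mono' (hF_meas z hz) ?_
    filter_upwards [hF_le] with x hx using hx z (mem_of_mem_nhds hV)
  have hderiv_meas : AEStronglyMeasurable (fun x => deriv (F · x) z) μ :=
    aestronglyMeasurable_deriv_parameter hF_meas'
      (hF_diff.mono fun x hx => hx.differentiableAt hUz)
  have hderiv_le : ∀ᵐ x ∂μ, ∀ v ∈ Metric.ball z (r / 2),
      ‖deriv (F · x) v‖ ≤ bound x / (r / 2) := by
    filter_upwards [hF_le, hF_diff] with x hx hdx v hv
    refine norm_deriv_le_of_forall_mem_sphere_norm_le (half_pos hr) ?_ fun u hu =>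
      hx u (hclosed v hv (Metric.sphere_subset_closedBall hu)).1
    exact (hdx.mono fun u hu => (hclosed v hv hu).2).diffContOnCl_ball subset_rfl
  have hderiv : ∀ᵐ x ∂μ, ∀ v ∈ Metric.ball z (r / 2),
      HasDerivAt (F · x) (deriv (F · x) v) v := by
    filter_upwards [hF_diff] with x hx v hv
    exact (hx.differentiableAt (hU.mem_nhds
      (hclosed v hv (Metric.mem_closedBall_self (half_pos hr).le)).2)).hasDerivAt
  exact (hasDerivAt_integral_of_dominated_loc_of_deriv_le (Metric.ball_mem_nhds z (half_pos hr))
    hF_meas' hF_int hderiv_meas hderiv_le (hbound.div_const _)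
    hderiv).2.differentiableAt.differentiableWithinAt

end ParametricIntegral

section GammaIntegral

variable {a r : ℂ}

theorem aestronglyMeasurable_cpow_mul_exp_neg_mul (a r : ℂ) :
    AEStronglyMeasurable (fun t : ℝ => (t : ℂ) ^ (a - 1) * exp (-(r * t)))
      (volume.restrict (Ioi 0)) := by
  refine ContinuousOn.aestronglyMeasurable (fun t ht => ContinuousAt.continuousWithinAt ?_)
    measurableSet_Ioi
  exact (continuousAt_ofReal_cpow_const _ _ (.inr (ne_of_gt ht))).mul (by fun_prop)

theorem norm_cpow_mul_exp_neg_mul {t : ℝ} (ht : 0 < t) :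
    ‖(t : ℂ) ^ (a - 1) * exp (-(r * t))‖ = t ^ (a.re - 1) * Real.exp (-(r.re * t)) := by
  rw [norm_mul, norm_cpow_eq_rpow_re_of_pos ht, norm_exp, sub_re, one_re, neg_re, re_mul_ofReal]

theorem integrableOn_rpow_mul_exp_neg_mul {σ b : ℝ} (hσ : 0 < σ) (hb : 0 < b) :
    IntegrableOn (fun t : ℝ => t ^ (σ - 1) * Real.exp (-(b * t))) (Ioi 0) := by
  simpa using integrableOn_rpow_mul_exp_neg_mul_rpow (p := 1) (by linarith) one_pos hb

theorem differentiableOn_integral_cpow_mul_exp_neg_mul (ha : 0 < a.re) :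
    DifferentiableOn ℂ (fun z : ℂ => ∫ t : ℝ in Ioi 0, (t : ℂ) ^ (a - 1) * exp (-(z * t)))
      {z | 0 < z.re} := by
  refine differentiableOn_integral_of_locally_dominated (isOpen_re_gt 0)
    (fun z _ => aestronglyMeasurable_cpow_mul_exp_neg_mul a z)
    (.of_forall fun t => by fun_prop) fun z hz => ?_
  refine ⟨{v | z.re / 2 < v.re},
    (isOpen_re_gt (z.re / 2)).mem_nhds (half_lt_self hz : z.re / 2 < z.re), _,
    integrableOn_rpow_mul_exp_neg_mul ha (half_pos hz), ?_⟩
  refine (ae_restrict_iff' measurableSet_Ioi).2 (.of_forall fun t (ht : 0 < t) v hv => ?_)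
  rw [norm_cpow_mul_exp_neg_mul ht]
  gcongr
  exact (show z.re / 2 < v.re from hv).le

theorem hasMellin_exp_neg_mul (ha : 0 < a.re) (hr : 0 < r.re) :
    HasMellin (fun t : ℝ => exp (-(r * t))) a (r ^ (-a) * Gamma a) := by
  refine ⟨?_, ?_⟩
  · refine (integrableOn_rpow_mul_exp_neg_mul ha hr).mono'
      (aestronglyMeasurable_cpow_mul_exp_neg_mul a r) ?_
    refine (ae_restrict_iff' measurableSet_Ioi).2 (.of_forall fun t ht => ?_)
    exact (norm_cpow_mul_exp_neg_mul ht).le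
  have hreal : ∀ᶠ x : ℝ in 𝓝[≠] 1,
      ∫ t : ℝ in Ioi 0, (t : ℂ) ^ (a - 1) * exp (-((x : ℂ) * t)) = (x : ℂ) ^ (-a) * Gamma a := by
    filter_upwards [nhdsWithin_le_nhds (lt_mem_nhds one_pos)] with x hx
    rw [integral_cpow_mul_exp_neg_mul_Ioi ha hx, one_div, inv_cpow _ _ (by
      rw [arg_ofReal_of_nonneg hx.le]; exact Real.pi_ne_zero.symm), cpow_neg]
  have hcast : Tendsto ((↑) : ℝ → ℂ) (𝓝[≠] 1) (𝓝[≠] 1) :=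
    tendsto_nhdsWithin_iff.2 ⟨(continuous_ofReal.tendsto' 1 1 ofReal_one).mono_left inf_le_left,
      eventually_mem_nhdsWithin.mono fun x hx => by simpa using hx⟩
  have hdiff : DifferentiableOn ℂ (fun z : ℂ => z ^ (-a) * Gamma a) {z | 0 < z.re} := fun z hz =>
    ((differentiableAt_id.cpow_const (.inl hz)).mul_const _).differentiableWithinAt
  exact ((differentiableOn_integral_cpow_mul_exp_neg_mul ha).analyticOnNhd
    (isOpen_re_gt 0)).eqOn_of_preconnected_of_frequently_eq (hdiff.analyticOnNhd (isOpen_re_gt 0))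
    (convex_halfSpace_re_gt 0).isPreconnected (by simp : (1 : ℂ) ∈ {z : ℂ | 0 < z.re})
    (hcast.frequently hreal.frequently) hr

theorem hasMellin_exp_neg_mul_mul (ha : 0 < a.re) (hr : 0 < r.re) {x : ℝ} (hx : 0 < x) :
    HasMellin (fun t : ℝ => exp (-(r * (x * t : ℝ)))) a
      ((x : ℂ) ^ (-a) * (r ^ (-a) * Gamma a)) := by
  obtain ⟨hconv, heq⟩ := hasMellin_exp_neg_mul ha hr
  refine ⟨(MellinConvergent.comp_mul_left hx).2 hconv, ?_⟩
  rw [mellin_comp_mul_left (fun t : ℝ => exp (-(r * t))) a hx, heq, smul_eq_mul]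

end GammaIntegral

section Mellin

theorem hasMellin_of_eqOn_const_mul {f g : ℝ → ℂ} {a s m : ℂ} (ha : a ≠ 0)
    (hfg : EqOn f (fun t => a * g t) (Ioi 0)) (hf : HasMellin f s m) :
    HasMellin g s (a⁻¹ * m) := by
  have hg : EqOn (fun t : ℝ => a⁻¹ * ((t : ℂ) ^ (s - 1) • f t))
      (fun t : ℝ => (t : ℂ) ^ (s - 1) • g t) (Ioi 0) := fun t ht => by
    simp only [hfg ht, smul_eq_mul]
    field_simp
  refine ⟨IntegrableOn.congr_fun (hf.1.const_mul a⁻¹) hg measurableSet_Ioi, ?_⟩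
  rw [mellin, ← setIntegral_congr_fun measurableSet_Ioi hg, integral_const_mul, ← mellin, hf.2]

theorem hasMellin_integral {Y E : Type*} [MeasurableSpace Y] {ν : Measure Y} [SFinite ν]
    [NormedAddCommGroup E] [NormedSpace ℂ E] {F : ℝ → Y → E} {s : ℂ}
    (hF : Integrable (fun p : ℝ × Y => (p.1 : ℂ) ^ (s - 1) • F p.1 p.2)
      ((volume.restrict (Ioi 0)).prod ν)) :
    HasMellin (fun t => ∫ y, F t y ∂ν) s (∫ y, mellin (F · y) s ∂ν) := by
  refine ⟨hF.integral_prod_left.congr (.of_forall fun t => by simp only [integral_smul]), ?_⟩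
  simp only [mellin, ← integral_smul]
  exact integral_integral_swap hF

end Mellin

section BetaIntegral

variable {c g s : ℂ}

theorem integrable_betaKernel (hc : 0 < c.re) (hs : 0 < s.re) (hsg : s.re < g.re) :
    Integrable (fun p : ℝ × ℝ => (p.1 : ℂ) ^ (s - 1) •
        ((p.2 : ℂ) ^ (g - 1) * exp (-((1 + c * p.1) * p.2))))
      ((volume.restrict (Ioi 0)).prod (volume.restrict (Ioi 0))) := by
  have hnorm {t x : ℝ} (ht : 0 < t) (hx : 0 < x) :
      ‖(t : ℂ) ^ (s - 1) • ((x : ℂ) ^ (g - 1) * exp (-((1 + c * t) * x)))‖ =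
        x ^ (g.re - 1) * Real.exp (-x) * (t ^ (s.re - 1) * Real.exp (-(c.re * x * t))) := by
    rw [norm_smul, norm_cpow_mul_exp_neg_mul hx, norm_cpow_eq_rpow_re_of_pos ht,
      show -((1 + c * (t : ℂ)).re * x) = -x + -(c.re * x * t) by
        simp only [add_re, one_re, mul_re, ofReal_re, ofReal_im, mul_zero, sub_zero]; ring,
      Real.exp_add, sub_re, one_re]
    ring
  have hmeas : Measurable (fun p : ℝ × ℝ => (p.1 : ℂ) ^ (s - 1) •
      ((p.2 : ℂ) ^ (g - 1) * exp (-((1 + c * p.1) * p.2)))) := by fun_prop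
  refine (integrable_prod_iff' hmeas.aestronglyMeasurable).2 ⟨?_, ?_⟩
  · refine (ae_restrict_iff' measurableSet_Ioi).2 (.of_forall fun x (hx : 0 < x) => ?_)
    refine ((integrableOn_rpow_mul_exp_neg_mul hs (mul_pos hc hx)).const_mul
      (x ^ (g.re - 1) * Real.exp (-x))).mono' (by fun_prop) ?_
    exact (ae_restrict_iff' measurableSet_Ioi).2 (.of_forall fun t ht => (hnorm ht hx).le)
  · refine ((integrableOn_rpow_mul_exp_neg_mul (sub_pos.2 hsg) one_pos).const_mul
      ((1 / c.re) ^ s.re * Real.Gamma s.re)).congr ?_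
    refine (ae_restrict_iff' measurableSet_Ioi).2 (.of_forall fun x (hx : 0 < x) => ?_)
    dsimp only
    rw [setIntegral_congr_fun measurableSet_Ioi fun t (ht : 0 < t) => hnorm ht hx,
      integral_const_mul, Real.integral_rpow_mul_exp_neg_mul_Ioi hs (mul_pos hc hx),
      ← one_div_mul_one_div, Real.mul_rpow (by positivity) (by positivity), one_mul, one_div x,
      Real.inv_rpow hx.le, show g.re - s.re - 1 = g.re - 1 - s.re by ring, Real.rpow_sub hx]
    ring

theorem integral_cpow_mul_exp_neg_one_add_mul (hg : 0 < g.re) (hc : 0 < c.re) {t : ℝ}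
    (ht : 0 < t) :
    ∫ x : ℝ in Ioi 0, (x : ℂ) ^ (g - 1) * exp (-((1 + c * t) * x)) =
      Gamma g * (1 + c * t) ^ (-g) := by
  have hre : 0 < (1 + c * t).re := by
    rw [add_re, one_re, re_mul_ofReal]
    exact add_pos one_pos (mul_pos hc ht)
  exact (hasMellin_exp_neg_mul hg hre).2.trans (mul_comm _ _)

theorem mellin_cpow_mul_exp_neg_one_add_mul (hs : 0 < s.re) (hc : 0 < c.re) {x : ℝ}
    (hx : 0 < x) :
    mellin (fun t : ℝ => (x : ℂ) ^ (g - 1) * exp (-((1 + c * t) * x))) s =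
      c ^ (-s) * Gamma s * ((x : ℂ) ^ (g - s - 1) * exp (-(1 * x))) := by
  have hsplit (t : ℝ) : (x : ℂ) ^ (g - 1) * exp (-((1 + c * t) * x)) =
      ((x : ℂ) ^ (g - 1) * exp (-x)) • exp (-(c * (x * t : ℝ))) := by
    rw [show -((1 + c * (t : ℂ)) * x) = -x + -(c * (x * t : ℝ)) by push_cast; ring, exp_add,
      smul_eq_mul, mul_assoc]
  have hpow : (x : ℂ) ^ (g - s - 1) = (x : ℂ) ^ (g - 1) * (x : ℂ) ^ (-s) := by
    rw [← cpow_add _ _ (ofReal_ne_zero.2 hx.ne')]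
    ring_nf
  simp only [hsplit]
  rw [mellin_const_smul, (hasMellin_exp_neg_mul_mul hs hc hx).2, hpow, one_mul, smul_eq_mul]
  ring

theorem hasMellin_one_add_mul_cpow_neg (hc : 0 < c.re) (hs : 0 < s.re) (hsg : s.re < g.re) :
    HasMellin (fun t : ℝ => (1 + c * t) ^ (-g)) s
      (c ^ (-s) * (Gamma s * Gamma (g - s) / Gamma g)) := by
  have hg : 0 < g.re := hs.trans hsg
  have hvalue : ∫ x : ℝ in Ioi 0,
      mellin (fun t : ℝ => (x : ℂ) ^ (g - 1) * exp (-((1 + c * t) * x))) s =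
        c ^ (-s) * Gamma s * Gamma (g - s) := by
    have hΓ := (hasMellin_exp_neg_mul (a := g - s) (r := 1) (by simpa using hsg) (by simp)).2
    simp only [mellin, smul_eq_mul, one_cpow, one_mul] at hΓ
    rw [setIntegral_congr_fun measurableSet_Ioi fun x hx =>
      mellin_cpow_mul_exp_neg_one_add_mul hs hc hx, integral_const_mul]
    simp only [one_mul, hΓ]
  convert hasMellin_of_eqOn_const_mul (Gamma_ne_zero_of_re_pos hg)
    (fun t ht => integral_cpow_mul_exp_neg_one_add_mul hg hc ht)
    (hasMellin_integral (integrable_betaKernel hc hs hsg)) using 1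
  rw [hvalue]
  ring

end BetaIntegral
section HankelContour

/-- The Hankel contour in the logarithmic coordinate `w = log ζ`: it comes in along the ray
`Im w = -θ`, crosses the segment `Re w = ρ` upwards at unit speed and leaves along the ray
`Im w = θ`. In the coordinate `ζ` the segment is an arc of radius `exp ρ`. -/
noncomputable def hankelPath (θ ρ τ : ℝ) : ℂ :=
  (ρ + max (|τ| - θ) 0 : ℝ) + (max (-θ) (min τ θ) : ℝ) * I

/-- The velocity of `hankelPath θ ρ` at `τ`, for `0 ≤ θ`; at the corners it is the left
derivative. -/
noncomputable def hankelDir (θ τ : ℝ) : ℂ :=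
  if τ ≤ -θ then -1 else if τ ≤ θ then I else 1

/-- The contour integral `∫ f w dw` along `hankelPath θ ρ`. The weight `e^ζ` of Hankel's formula is
part of `f`, as the factor `exp (exp w)`. -/
noncomputable def hankelIntegral (θ ρ : ℝ) (f : ℂ → ℂ) : ℂ :=
  ∫ τ : ℝ, hankelDir θ τ * f (hankelPath θ ρ τ)

variable {θ ρ : ℝ} {f : ℂ → ℂ}

theorem hankelIntegral_const_mul (θ ρ : ℝ) (a : ℂ) (f : ℂ → ℂ) :
    hankelIntegral θ ρ (fun w => a * f w) = a * hankelIntegral θ ρ f := by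
  simp only [hankelIntegral, mul_left_comm (hankelDir θ _), integral_const_mul]

@[fun_prop]
theorem continuous_hankelPath (θ ρ : ℝ) : Continuous (hankelPath θ ρ) := by
  unfold hankelPath
  fun_prop

@[fun_prop]
theorem measurable_hankelDir (θ : ℝ) : Measurable (hankelDir θ) :=
  Measurable.ite measurableSet_Iic measurable_const
    (Measurable.ite measurableSet_Iic measurable_const measurable_const)

theorem norm_hankelDir (θ τ : ℝ) : ‖hankelDir θ τ‖ = 1 := by
  unfold hankelDir
  split_ifs <;> simp

theorem hankelPath_re (θ ρ τ : ℝ) : (hankelPath θ ρ τ).re = ρ + max (|τ| - θ) 0 := by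
  simp [hankelPath]

theorem hankelPath_im (θ ρ τ : ℝ) : (hankelPath θ ρ τ).im = max (-θ) (min τ θ) := by
  simp [hankelPath]

theorem le_hankelPath_re (θ ρ τ : ℝ) : ρ ≤ (hankelPath θ ρ τ).re := by
  rw [hankelPath_re]
  exact le_add_of_nonneg_right (le_max_right _ _)

theorem abs_hankelPath_im_le (hθ : 0 ≤ θ) (ρ τ : ℝ) : |(hankelPath θ ρ τ).im| ≤ θ := by
  rw [hankelPath_im]
  exact abs_le.2 ⟨le_max_left _ _, max_le (by linarith) (min_le_right _ _)⟩

theorem hankelPath_of_le {τ : ℝ} (hθ : 0 ≤ θ) (hτ : θ ≤ τ) :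
    hankelPath θ ρ τ = (ρ + (τ - θ) : ℝ) + (θ : ℂ) * I := by
  rw [hankelPath, abs_of_nonneg (hθ.trans hτ), max_eq_left (sub_nonneg.2 hτ), min_eq_right hτ,
    max_eq_right (by linarith)]

theorem hankelPath_neg (hθ : 0 ≤ θ) (ρ τ : ℝ) :
    hankelPath θ ρ (-τ) = (starRingEnd ℂ) (hankelPath θ ρ τ) := by
  refine Complex.ext ?_ ?_
  · rw [conj_re, hankelPath_re, hankelPath_re, abs_neg]
  · rw [conj_im, hankelPath_im, hankelPath_im]
    grind

theorem hankelPath_of_mem_Icc {τ : ℝ} (hτ : τ ∈ Icc (-θ) θ) :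
    hankelPath θ ρ τ = (ρ : ℂ) + τ * I := by
  rw [hankelPath, max_eq_right (sub_nonpos.2 (abs_le.2 hτ)), min_eq_left hτ.2,
    max_eq_right hτ.1, add_zero]

theorem eventually_mul_add_le_mul_exp (A B : ℝ) {c : ℝ} (hc : 0 < c) :
    ∀ᶠ τ in atTop, A * τ + B ≤ c * Real.exp τ := by
  have hlin : (fun τ : ℝ => A * τ) =o[atTop] Real.exp := by
    simpa using (Real.isLittleO_pow_exp_atTop (n := 1)).const_mul_left A
  have hconst : (fun _ : ℝ => B) =o[atTop] Real.exp := by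
    refine Asymptotics.isLittleO_const_left.2 (.inr ?_)
    exact tendsto_norm_atTop_atTop.comp Real.tendsto_exp_atTop
  filter_upwards [(hlin.add hconst).bound hc] with τ hτ
  rw [Real.norm_of_nonneg (Real.exp_pos τ).le] at hτ
  exact (le_abs_self _).trans hτ

theorem re_exp_hankelPath_of_le {τ : ℝ} (hθ : 0 ≤ θ) (hτ : θ ≤ τ) :
    (exp (hankelPath θ ρ τ)).re = Real.exp (ρ - θ) * Real.exp τ * Real.cos θ := by
  rw [exp_re, hankelPath_of_le hθ hτ, ← Real.exp_add,
    show ρ - θ + τ = ρ + (τ - θ) by ring]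
  simp

theorem norm_hankelPath_le (hθ : 0 ≤ θ) (ρ τ : ℝ) : ‖hankelPath θ ρ τ‖ ≤ |ρ| + |τ| + θ := by
  refine (norm_le_abs_re_add_abs_im _).trans
    (add_le_add ?_ (abs_hankelPath_im_le hθ ρ τ))
  rw [hankelPath_re]
  refine (abs_add_le _ _).trans (add_le_add_right ?_ _)
  rw [abs_of_nonneg (le_max_right _ _)]
  exact max_le (by linarith) (abs_nonneg τ)

theorem integrable_exp_hankelPath (hθ : 0 ≤ θ) (hcos : Real.cos θ < 0) (ρ R : ℝ) :
    Integrable fun τ : ℝ =>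
      Real.exp ((exp (hankelPath θ ρ τ)).re + R * ‖hankelPath θ ρ τ‖) := by
  have hray : ∀ᶠ τ in atTop, (exp (hankelPath θ ρ τ)).re + R * ‖hankelPath θ ρ τ‖ ≤ -τ := by
    filter_upwards [eventually_ge_atTop θ, eventually_mul_add_le_mul_exp (|R| + 1)
      (|R| * (|ρ| + θ)) (mul_pos (Real.exp_pos (ρ - θ)) (neg_pos.2 hcos))] with τ hτ hexp
    have hnorm : R * ‖hankelPath θ ρ τ‖ ≤ |R| * (|ρ| + τ + θ) := by
      gcongr
      · exact le_abs_self R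
      · simpa [abs_of_nonneg (hθ.trans hτ)] using norm_hankelPath_le hθ ρ τ
    rw [re_exp_hankelPath_of_le hθ hτ]
    linarith
  refine LocallyIntegrable.integrable_of_isBigO_atTop_of_norm_isNegInvariant
    (g := fun τ => Real.exp (-τ)) (Continuous.locallyIntegrable (by fun_prop))
    (.of_forall fun τ => ?_) ?_ ⟨Ioi 0, Ioi_mem_atTop 0, integrableOn_exp_neg_Ioi 0⟩
  · simp only [Function.comp_apply, hankelPath_neg hθ, exp_conj, conj_re, norm_conj]
  · refine Asymptotics.IsBigO.of_bound 1 ?_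
    filter_upwards [hray] with τ hτ
    simpa using hτ

theorem integrable_hankelDir_mul (hθ : 0 ≤ θ) (hcos : Real.cos θ < 0) (ρ : ℝ) {C R : ℝ}
    (hf : ContinuousOn f {w | |w.im| ≤ θ})
    (hle : ∀ w : ℂ, |w.im| ≤ θ → ‖f w‖ ≤ C * Real.exp ((exp w).re + R * ‖w‖)) :
    Integrable fun τ : ℝ => hankelDir θ τ * f (hankelPath θ ρ τ) := by
  have hcont : Continuous fun τ => f (hankelPath θ ρ τ) :=
    hf.comp_continuous (continuous_hankelPath θ ρ) (abs_hankelPath_im_le hθ ρ)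
  refine ((integrable_exp_hankelPath hθ hcos ρ R).const_mul C).mono'
    ((measurable_hankelDir θ).aestronglyMeasurable.mul hcont.aestronglyMeasurable)
    (.of_forall fun τ => ?_)
  rw [norm_mul, norm_hankelDir, one_mul]
  exact hle _ (abs_hankelPath_im_le hθ ρ τ)

theorem setIntegral_Ioi_comp_add_right {E : Type*} [NormedAddCommGroup E] [NormedSpace ℝ E]
    (f : ℝ → E) (a d : ℝ) : ∫ x in Ioi a, f (x + d) = ∫ x in Ioi (a + d), f x := by
  have := (measurePreserving_add_right volume d).setIntegral_preimage_emb
    (measurableEmbedding_addRight d) f (Ioi (a + d))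
  simpa using this

theorem integrableOn_Ioi_comp_add_right {E : Type*} [NormedAddCommGroup E]
    (f : ℝ → E) (a d : ℝ) :
    IntegrableOn (fun x => f (x + d)) (Ioi a) ↔ IntegrableOn f (Ioi (a + d)) := by
  have := (measurePreserving_add_right volume d).integrableOn_comp_preimage
    (measurableEmbedding_addRight d) (f := f) (s := Ioi (a + d))
  simpa [Function.comp_def] using this

theorem hankelDir_of_lt {τ : ℝ} (hθ : 0 ≤ θ) (hτ : θ < τ) : hankelDir θ τ = 1 := by
  rw [hankelDir, if_neg (by linarith), if_neg hτ.not_ge]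

theorem hankelDir_of_le {τ : ℝ} (hτ : τ ≤ -θ) : hankelDir θ τ = -1 :=
  if_pos hτ

theorem hankelDir_of_mem_Ioc {τ : ℝ} (hτ : τ ∈ Ioc (-θ) θ) : hankelDir θ τ = I := by
  rw [hankelDir, if_neg hτ.1.not_ge, if_pos hτ.2]

theorem hankelDir_mul_hankelPath_upper (hθ : 0 ≤ θ) (f : ℂ → ℂ) :
    EqOn (fun τ => hankelDir θ τ * f (hankelPath θ ρ τ))
      (fun τ => f ((τ + (ρ - θ) : ℝ) + θ * I)) (Ioi θ) := by
  intro τ (hτ : θ < τ)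
  dsimp only
  rw [hankelDir_of_lt hθ hτ, hankelPath_of_le hθ hτ.le, one_mul, add_sub_left_comm]

theorem hankelDir_mul_hankelPath_lower (hθ : 0 ≤ θ) (f : ℂ → ℂ) :
    EqOn (fun τ => hankelDir θ (-τ) * f (hankelPath θ ρ (-τ)))
      (fun τ => -f ((τ + (ρ - θ) : ℝ) + (-θ : ℝ) * I)) (Ioi θ) := by
  intro τ (hτ : θ < τ)
  dsimp only
  rw [hankelDir_of_le (neg_le_neg hτ.le), hankelPath_neg hθ, hankelPath_of_le hθ hτ.le,
    neg_one_mul, map_add, map_mul, conj_ofReal, conj_ofReal, conj_I, add_sub_left_comm]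
  simp

theorem integrableOn_ray_upper (hθ : 0 ≤ θ)
    (hf : Integrable fun τ => hankelDir θ τ * f (hankelPath θ ρ τ)) :
    IntegrableOn (fun x : ℝ => f (x + θ * I)) (Ioi ρ) := by
  have := hf.integrableOn.congr_fun (hankelDir_mul_hankelPath_upper hθ f) measurableSet_Ioi
  rwa [integrableOn_Ioi_comp_add_right (fun x : ℝ => f (x + θ * I)), add_sub_cancel] at this

theorem integrableOn_ray_lower (hθ : 0 ≤ θ)
    (hf : Integrable fun τ => hankelDir θ τ * f (hankelPath θ ρ τ)) :
    IntegrableOn (fun x : ℝ => f (x + (-θ : ℝ) * I)) (Ioi ρ) := by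
  have := (hf.comp_neg.integrableOn.congr_fun (hankelDir_mul_hankelPath_lower hθ f)
    measurableSet_Ioi).neg
  simp only [Pi.neg_def, neg_neg] at this
  rwa [integrableOn_Ioi_comp_add_right (fun x : ℝ => f (x + (-θ : ℝ) * I)),
    add_sub_cancel] at this

theorem hankelIntegral_eq_rays (hθ : 0 ≤ θ)
    (hf : Integrable fun τ => hankelDir θ τ * f (hankelPath θ ρ τ)) :
    hankelIntegral θ ρ f =
      (∫ x : ℝ in Ioi ρ, f (x + θ * I)) - (∫ x : ℝ in Ioi ρ, f (x + (-θ : ℝ) * I)) +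
        I * ∫ y in (-θ)..θ, f (ρ + y * I) := by
  have hupper : ∫ τ in Ioi θ, hankelDir θ τ * f (hankelPath θ ρ τ) =
      ∫ x : ℝ in Ioi ρ, f (x + θ * I) := by
    rw [setIntegral_congr_fun measurableSet_Ioi (hankelDir_mul_hankelPath_upper hθ f),
      setIntegral_Ioi_comp_add_right (fun x : ℝ => f (x + θ * I)), add_sub_cancel]
  have hlower : ∫ τ in Iic (-θ), hankelDir θ τ * f (hankelPath θ ρ τ) =
      -∫ x : ℝ in Ioi ρ, f (x + (-θ : ℝ) * I) := by
    rw [← integral_comp_neg_Ioi,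
      setIntegral_congr_fun measurableSet_Ioi (hankelDir_mul_hankelPath_lower hθ f),
      integral_neg, setIntegral_Ioi_comp_add_right (fun x : ℝ => f (x + (-θ : ℝ) * I)),
      add_sub_cancel]
  have hmiddle : ∫ τ in (-θ)..θ, hankelDir θ τ * f (hankelPath θ ρ τ) =
      I * ∫ y in (-θ)..θ, f (ρ + y * I) := by
    rw [← intervalIntegral.integral_const_mul]
    refine intervalIntegral.integral_congr_ae (.of_forall fun τ hτ => ?_)
    rw [uIoc_of_le (by linarith)] at hτ
    rw [hankelDir_of_mem_Ioc hτ, hankelPath_of_mem_Icc (Ioc_subset_Icc_self hτ)]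
  rw [hankelIntegral,
    ← intervalIntegral.integral_Iic_add_Ioi hf.integrableOn hf.integrableOn (b := -θ), hlower,
    ← intervalIntegral.integral_interval_add_Ioi hf.integrableOn hf.integrableOn (b := θ),
    hmiddle, hupper]
  ring

theorem hankelIntegral_eq_hankelIntegral (hθ : 0 ≤ θ) (hcos : Real.cos θ < 0) {C R : ℝ}
    (hf : DifferentiableOn ℂ f {w | |w.im| ≤ θ})
    (hle : ∀ w : ℂ, |w.im| ≤ θ → ‖f w‖ ≤ C * Real.exp ((exp w).re + R * ‖w‖)) (ρ₁ ρ₂ : ℝ) :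
    hankelIntegral θ ρ₁ f = hankelIntegral θ ρ₂ f := by
  have hint (ρ : ℝ) := integrable_hankelDir_mul hθ hcos ρ hf.continuousOn hle
  have hrect := integral_boundary_rect_eq_zero_of_differentiableOn f
    (ρ₁ + (-θ : ℝ) * I) (ρ₂ + θ * I) (hf.mono fun w hw => by
      simpa [uIcc_of_le (neg_le_self hθ), abs_le] using hw.2)
  have hupper := intervalIntegral.integral_interval_add_Ioi
    (integrableOn_ray_upper hθ (hint ρ₁)) (integrableOn_ray_upper hθ (hint ρ₂))
  have hlower := intervalIntegral.integral_interval_add_Ioi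
    (integrableOn_ray_lower hθ (hint ρ₁)) (integrableOn_ray_lower hθ (hint ρ₂))
  simp only [add_re, ofReal_re, re_ofReal_mul, I_re, mul_zero, add_zero, add_im, ofReal_im,
    im_ofReal_mul, I_im, mul_one, zero_add, smul_eq_mul] at hrect
  rw [hankelIntegral_eq_rays hθ (hint ρ₁), hankelIntegral_eq_rays hθ (hint ρ₂), ← hupper,
    ← hlower]
  linear_combination -hrect

end HankelContour

section RayIntegrals

theorem setIntegral_exp_neg_exp_mul_exp (a : ℂ) (δ ρ : ℝ) :
    ∫ x : ℝ in Ioi ρ, exp (-exp (x + δ * I)) * exp (a * (x + δ * I)) =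
      exp (a * (δ * I)) *
        ∫ y : ℝ in Ioi (Real.exp ρ), (y : ℂ) ^ (a - 1) * exp (-(exp (δ * I) * y)) := by
  rw [← integral_comp_exp_Ioi, ← integral_const_mul]
  refine setIntegral_congr_fun measurableSet_Ioi fun x _ => ?_
  have hlog : log (exp x) = x := by
    rw [← ofReal_exp, ← ofReal_log (Real.exp_pos x).le, Real.log_exp]
  rw [real_smul, ofReal_exp, cpow_def_of_ne_zero (exp_ne_zero _), hlog, exp_add,
    show a * (x + δ * I) = a * (δ * I) + (x + x * (a - 1)) by ring, exp_add, exp_add]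
  ring_nf

theorem tendsto_integral_exp_neg_exp_mul_exp {a : ℂ} (ha : 0 < a.re) {δ : ℝ}
    (hδ : |δ| < Real.pi / 2) :
    Tendsto (fun ρ : ℝ => ∫ x : ℝ in Ioi ρ, exp (-exp (x + δ * I)) * exp (a * (x + δ * I)))
      atBot (𝓝 (Gamma a)) := by
  obtain ⟨hδ₁, hδ₂⟩ := abs_lt.1 hδ
  have hre : 0 < (exp (δ * I)).re := by
    rw [exp_ofReal_mul_I_re]
    exact Real.cos_pos_of_mem_Ioo ⟨hδ₁, hδ₂⟩
  have hpow : exp (δ * I) ^ (-a) = exp (-(a * (δ * I))) := by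
    have him : (δ * I : ℂ).im = δ := by rw [mul_I_im, ofReal_re]
    rw [cpow_def_of_ne_zero (exp_ne_zero _), log_exp (by linarith) (by linarith)]
    ring_nf
  have hvalue : exp (a * (δ * I)) * (exp (δ * I) ^ (-a) * Gamma a) = Gamma a := by
    rw [hpow, ← mul_assoc, ← exp_add, add_neg_cancel, exp_zero, one_mul]
  obtain ⟨hconv, heq⟩ := hasMellin_exp_neg_mul ha hre
  have hlim := ((aecover_Ioi_of_Ioi (μ := volume)
    Real.tendsto_exp_atBot).integral_tendsto_of_countably_generated hconv).const_mul
      (exp (a * (δ * I)))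
  rw [← mellin, heq, hvalue] at hlim
  refine hlim.congr fun ρ => ?_
  rw [setIntegral_exp_neg_exp_mul_exp, Measure.restrict_restrict measurableSet_Ioi, Ioi_inter_Ioi,
    sup_of_le_left (Real.exp_pos ρ).le]
  rfl

theorem tendsto_integral_exp_exp_ray {a : ℂ} (ha : 0 < a.re) {φ ψ : ℝ}
    (hφ : exp (φ * I) = -1) (hψ : |ψ - φ| < Real.pi / 2) :
    Tendsto (fun ρ : ℝ => ∫ x : ℝ in Ioi ρ, exp (exp (x + ψ * I)) * exp (a * (x + ψ * I)))
      atBot (𝓝 (exp (a * (φ * I)) * Gamma a)) := by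
  refine ((tendsto_integral_exp_neg_exp_mul_exp ha hψ).const_mul _).congr fun ρ => ?_
  rw [← integral_const_mul]
  congr with x
  rw [show (x : ℂ) + ψ * I = x + (ψ - φ : ℝ) * I + φ * I by push_cast; ring,
    exp_add (x + (ψ - φ : ℝ) * I), hφ, mul_neg_one, mul_add a _ (φ * I),
    exp_add (a * (x + (ψ - φ : ℝ) * I))]
  ring

theorem tendsto_integral_exp_exp_segment {a : ℂ} (ha : 0 < a.re) {θ : ℝ} (hθ : 0 ≤ θ) :
    Tendsto (fun ρ : ℝ => ∫ y in (-θ)..θ, exp (exp (ρ + y * I)) * exp (a * (ρ + y * I)))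
      atBot (𝓝 0) := by
  have hbound (ρ : ℝ) : ‖∫ y in (-θ)..θ, exp (exp (ρ + y * I)) * exp (a * (ρ + y * I))‖ ≤
      Real.exp (Real.exp ρ) * Real.exp (a.re * ρ) * Real.exp (|a.im| * θ) * |θ - -θ| := by
    refine intervalIntegral.norm_integral_le_of_norm_le_const fun y hy => ?_
    rw [uIoc_of_le (neg_le_self hθ)] at hy
    have hexp : (exp (ρ + y * I)).re ≤ Real.exp ρ := by
      refine (re_le_norm _).trans_eq ?_
      rw [norm_exp]
      simp
    have him : -(a.im * y) ≤ |a.im| * θ := by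
      refine (neg_le_abs _).trans ?_
      rw [abs_mul]
      gcongr
      exact abs_le.2 (Ioc_subset_Icc_self hy)
    rw [norm_mul, norm_exp, norm_exp, mul_assoc, ← Real.exp_add (a.re * ρ)]
    gcongr
    simpa [sub_eq_add_neg] using him
  refine squeeze_zero_norm hbound ?_
  have h₁ : Tendsto (fun ρ : ℝ => Real.exp (Real.exp ρ)) atBot (𝓝 1) :=
    Real.exp_zero ▸ (Real.continuous_exp.tendsto 0).comp Real.tendsto_exp_atBot
  have h₂ : Tendsto (fun ρ : ℝ => Real.exp (a.re * ρ)) atBot (𝓝 0) :=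
    Real.tendsto_exp_atBot.comp (tendsto_id.const_mul_atBot ha)
  simpa using ((h₁.mul h₂).mul_const (Real.exp (|a.im| * θ))).mul_const |θ - -θ|

end RayIntegrals

section HankelFormula

variable {θ : ℝ}

theorem norm_exp_exp_mul_le {g : ℂ → ℂ} {C R : ℝ} {w : ℂ} (hg : ‖g w‖ ≤ C * Real.exp (R * ‖w‖)) :
    ‖exp (exp w) * g w‖ ≤ C * Real.exp ((exp w).re + R * ‖w‖) := by
  rw [norm_mul, norm_exp, Real.exp_add, mul_left_comm]
  gcongr

theorem norm_exp_mul_le (a w : ℂ) : ‖exp (a * w)‖ ≤ Real.exp (‖a‖ * ‖w‖) := by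
  rw [norm_exp, ← norm_mul]
  gcongr
  exact re_le_norm _

theorem norm_exp_exp_mul_exp_mul_le {a w : ℂ} {R : ℝ} (ha : ‖a‖ ≤ R) :
    ‖exp (exp w) * exp (a * w)‖ ≤ 1 * Real.exp ((exp w).re + R * ‖w‖) := by
  refine norm_exp_exp_mul_le (g := fun w => exp (a * w)) ?_
  rw [one_mul]
  exact (norm_exp_mul_le a w).trans (by gcongr)

theorem cos_neg_of_pi_div_two_lt_of_le_pi (hθ : Real.pi / 2 < θ) (hθ' : θ ≤ Real.pi) :
    Real.cos θ < 0 :=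
  Real.cos_neg_of_pi_div_two_lt_of_lt hθ (by linarith [pi_pos])

theorem Gamma_mul_sin_pi_mul {a : ℂ} (ha : 0 < a.re) :
    Gamma a * sin (Real.pi * a) = Real.pi * (Gamma (1 - a))⁻¹ := by
  have hΓ : Gamma a ≠ 0 := Gamma_ne_zero_of_re_pos ha
  rw [eq_div_of_mul_eq hΓ ((mul_comm _ _).trans (Gamma_mul_Gamma_one_sub a))]
  field_simp

theorem tendsto_hankelIntegral_exp (hθ : Real.pi / 2 < θ) (hθ' : θ ≤ Real.pi) {a : ℂ}
    (ha : 0 < a.re) :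
    Tendsto (fun ρ => hankelIntegral θ ρ fun w => exp (exp w) * exp (a * w)) atBot
      (𝓝 (2 * Real.pi * I * (Gamma (1 - a))⁻¹)) := by
  have hθ₀ : 0 ≤ θ := by linarith [pi_pos]
  have hupper := tendsto_integral_exp_exp_ray ha exp_pi_mul_I
    (abs_lt.2 ⟨by linarith, by linarith⟩ : |θ - Real.pi| < Real.pi / 2)
  have hlower := tendsto_integral_exp_exp_ray ha (φ := -Real.pi)
    (by rw [ofReal_neg, neg_mul, exp_neg, exp_pi_mul_I]; norm_num)
    (abs_lt.2 ⟨by linarith, by linarith⟩ : |-θ - -Real.pi| < Real.pi / 2)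
  have hvalue : exp (a * (Real.pi * I)) * Gamma a - exp (a * ((-Real.pi : ℝ) * I)) * Gamma a +
      I * 0 = 2 * Real.pi * I * (Gamma (1 - a))⁻¹ := by
    calc exp (a * (Real.pi * I)) * Gamma a - exp (a * ((-Real.pi : ℝ) * I)) * Gamma a + I * 0
        = 2 * I * (Gamma a * sin (Real.pi * a)) := by
          rw [sin]
          push_cast
          ring_nf
          rw [I_sq]
          ring_nf
      _ = 2 * Real.pi * I * (Gamma (1 - a))⁻¹ := by
          rw [Gamma_mul_sin_pi_mul ha]
          ring
  rw [← hvalue]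
  refine ((hupper.sub hlower).add
    ((tendsto_integral_exp_exp_segment ha hθ₀).const_mul I)).congr fun ρ => ?_
  exact (hankelIntegral_eq_rays hθ₀ (integrable_hankelDir_mul hθ₀
    (cos_neg_of_pi_div_two_lt_of_le_pi hθ hθ') ρ (by fun_prop)
    fun w _ => norm_exp_exp_mul_exp_mul_le (le_refl ‖a‖))).symm

theorem hankelIntegral_exp_of_re_pos (hθ : Real.pi / 2 < θ) (hθ' : θ ≤ Real.pi) (ρ : ℝ) {a : ℂ}
    (ha : 0 < a.re) :
    hankelIntegral θ ρ (fun w => exp (exp w) * exp (a * w)) =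
      2 * Real.pi * I * (Gamma (1 - a))⁻¹ := by
  refine tendsto_nhds_unique (tendsto_const_nhds.congr fun ρ' => ?_)
    (tendsto_hankelIntegral_exp hθ hθ' ha)
  exact hankelIntegral_eq_hankelIntegral (by linarith [pi_pos])
    (cos_neg_of_pi_div_two_lt_of_le_pi hθ hθ') (by fun_prop)
    (fun w _ => norm_exp_exp_mul_exp_mul_le (le_refl ‖a‖)) ρ ρ'

theorem differentiable_hankelIntegral_exp (hθ : 0 ≤ θ) (hcos : Real.cos θ < 0) (ρ : ℝ) :
    Differentiable ℂ fun a => hankelIntegral θ ρ fun w => exp (exp w) * exp (a * w) := by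
  refine differentiableOn_univ.1 (differentiableOn_integral_of_locally_dominated isOpen_univ
    (fun a _ => ?_) (.of_forall fun τ => by fun_prop) fun a _ => ?_)
  · exact (integrable_hankelDir_mul hθ hcos ρ (by fun_prop) fun w _ =>
      norm_exp_exp_mul_exp_mul_le (a := a) le_rfl).aestronglyMeasurable
  · refine ⟨Metric.ball 0 (‖a‖ + 1), Metric.isOpen_ball.mem_nhds (by simp), _,
      (integrable_exp_hankelPath hθ hcos ρ (‖a‖ + 1)).const_mul 1, .of_forall fun τ v hv => ?_⟩
    rw [norm_mul, norm_hankelDir, one_mul]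
    exact norm_exp_exp_mul_exp_mul_le (mem_ball_zero_iff.1 hv).le

theorem hankelIntegral_exp (hθ : Real.pi / 2 < θ) (hθ' : θ ≤ Real.pi) (ρ : ℝ) (a : ℂ) :
    hankelIntegral θ ρ (fun w => exp (exp w) * exp (a * w)) =
      2 * Real.pi * I * (Gamma (1 - a))⁻¹ := by
  have hΓ : Differentiable ℂ fun a : ℂ => 2 * Real.pi * I * (Gamma (1 - a))⁻¹ :=
    (differentiable_one_div_Gamma.comp (differentiable_id.const_sub 1)).const_mul _
  have hH := differentiable_hankelIntegral_exp (by linarith [pi_pos])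
    (cos_neg_of_pi_div_two_lt_of_le_pi hθ hθ') ρ
  refine congrFun (AnalyticOnNhd.eq_of_eventuallyEq (z₀ := (1 : ℂ))
    (fun z _ => hH.analyticAt z) (fun z _ => hΓ.analyticAt z) ?_) a
  filter_upwards [(isOpen_re_gt 0).mem_nhds (by simp : (1 : ℂ) ∈ {z : ℂ | 0 < z.re})] with z hz
  exact hankelIntegral_exp_of_re_pos hθ hθ' ρ hz

end HankelFormula

section BinomialSeries

theorem poch_eq_ascPochhammer_eval (γ : ℝ) (k : ℕ) :
    poch γ k = (ascPochhammer ℝ k).eval γ := by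
  induction k with
  | zero => simp [poch]
  | succ k ih => rw [ascPochhammer_succ_eval, ← ih, poch, poch, Finset.prod_range_succ]

theorem choose_add_sub_one_eq_poch_div_factorial (γ : ℝ) (k : ℕ) :
    Ring.choose ((γ : ℂ) + k - 1) k = (poch γ k / k.factorial : ℝ) := by
  have hfac : (k.factorial : ℂ) ≠ 0 := mod_cast k.factorial_ne_zero
  have hmulti := Ring.factorial_nsmul_multichoose_eq_ascPochhammer (γ : ℂ) k
  rw [nsmul_eq_mul, Polynomial.ascPochhammer_smeval_eq_eval, ← ascPochhammer_map ofRealHom,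
    Polynomial.eval_map, ← ofRealHom_eq_coe, Polynomial.eval₂_at_apply,
    ← poch_eq_ascPochhammer_eval] at hmulti
  rw [ofReal_div, ofReal_natCast, eq_div_iff hfac, ← ofRealHom_eq_coe (poch γ k), ← hmulti,
    mul_comm, Ring.choose]
  congr 2
  ring_nf
  rfl

theorem hasSum_poch_div_factorial_mul_pow (γ : ℝ) {z : ℂ} (hz : ‖z‖ < 1) :
    HasSum (fun k : ℕ => ((poch γ k / k.factorial : ℝ) : ℂ) * z ^ k) ((1 - z) ^ (-(γ : ℂ))) := by
  have hseries := (one_div_one_sub_cpow_hasFPowerSeriesOnBall_zero (γ : ℂ)).hasSum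
    (y := z) (by simpa [← ofReal_norm] using hz)
  simpa [FormalMultilinearSeries.ofScalars_apply_eq, choose_add_sub_one_eq_poch_div_factorial,
    mul_comm, cpow_neg] using hseries

theorem summable_abs_poch_div_factorial_mul_pow (γ : ℝ) {q : ℝ} (hq₀ : 0 ≤ q) (hq : q < 1) :
    Summable fun k : ℕ => |poch γ k / k.factorial| * q ^ k := by
  have := (hasSum_poch_div_factorial_mul_pow γ (z := q)
    (by rwa [norm_real, Real.norm_of_nonneg hq₀])).summable.norm
  simpa [abs_of_nonneg hq₀, abs_div] using this

theorem hasSum_integral_mul_one_sub_cpow_neg {X : Type*} [MeasurableSpace X] {μ : Measure X}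
    {A z : X → ℂ} {q : ℝ} (γ : ℝ) (hA : Integrable A μ) (hz : AEStronglyMeasurable z μ)
    (hzq : ∀ x, ‖z x‖ ≤ q) (hq₀ : 0 ≤ q) (hq : q < 1) :
    HasSum (fun k : ℕ => ((poch γ k / k.factorial : ℝ) : ℂ) * ∫ x, A x * z x ^ k ∂μ)
      (∫ x, A x * (1 - z x) ^ (-(γ : ℂ)) ∂μ) := by
  let c : ℕ → ℝ := fun k => poch γ k / k.factorial
  have hle (k : ℕ) (x : X) : ‖(c k : ℂ) * (A x * z x ^ k)‖ ≤ |c k| * q ^ k * ‖A x‖ := by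
    rw [norm_mul, norm_mul, norm_real, norm_pow, Real.norm_eq_abs, mul_comm ‖A x‖, mul_assoc]
    gcongr
    exact hzq x
  have hint (k : ℕ) : Integrable (fun x => (c k : ℂ) * (A x * z x ^ k)) μ :=
    (hA.norm.const_mul _).mono' ((hA.aestronglyMeasurable.mul (hz.pow k)).const_mul _)
      (.of_forall (hle k))
  have hsummable : Summable fun k => ∫ x, ‖(c k : ℂ) * (A x * z x ^ k)‖ ∂μ := by
    refine .of_nonneg_of_le (fun k => integral_nonneg fun x => norm_nonneg _) (fun k => ?_)
      ((summable_abs_poch_div_factorial_mul_pow γ hq₀ hq).mul_right (∫ x, ‖A x‖ ∂μ))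
    rw [← integral_const_mul]
    exact integral_mono (hint k).norm (hA.norm.const_mul _) (hle k)
  have hsum (x : X) : ∑' k, (c k : ℂ) * (A x * z x ^ k) = A x * (1 - z x) ^ (-(γ : ℂ)) := by
    simp only [mul_left_comm _ (A x)]
    rw [tsum_mul_left, (hasSum_poch_div_factorial_mul_pow γ ((hzq x).trans_lt hq)).tsum_eq]
  simpa only [integral_const_mul, hsum] using
    hasSum_integral_of_summable_integral_norm hint hsummable

end BinomialSeries

section HankelRepresentation

variable {α β γ θ ρ t : ℝ}

/-- In terms of `ζ = exp w`, this is the integrand `e^ζ ζ^(αγ-β) (ζ^α + t)^(-γ) dζ` of the inverse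
Laplace transform representing `2πi E_{α,β}^γ(-t)`. -/
noncomputable def prabhakarIntegrand (α β γ t : ℝ) (w : ℂ) : ℂ :=
  exp (exp w) * (exp ((1 - β) * w) * (1 + exp (-(α * w)) * t) ^ (-(γ : ℂ)))

theorem ofReal_prabhakarR (α β γ x : ℝ) : (prabhakarR α β γ x : ℂ) =
    ∑' k : ℕ, (poch γ k / k.factorial : ℝ) * ((x : ℂ) ^ k * (Gamma (β + α * k))⁻¹) := by
  rw [prabhakarR, ofReal_tsum]
  refine tsum_congr fun k => ?_
  rw [show (β + α * k : ℂ) = ((α * k + β : ℝ) : ℂ) by push_cast; ring, Gamma_ofReal]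
  push_cast
  field_simp

theorem norm_neg_exp_neg_hankelPath_mul_le (hα : 0 ≤ α) (θ ρ t τ : ℝ) :
    ‖-(exp (-(α * hankelPath θ ρ τ)) * t)‖ ≤ Real.exp (-(α * ρ)) * |t| := by
  rw [norm_neg, norm_mul, norm_real, Real.norm_eq_abs, norm_exp, neg_re, re_ofReal_mul]
  gcongr
  exact le_hankelPath_re θ ρ τ

theorem hankelIntegral_exp_mul_pow (hθ : Real.pi / 2 < θ) (hθ' : θ ≤ Real.pi)
    (α β ρ t : ℝ) (k : ℕ) :
    hankelIntegral θ ρ (fun w => exp (exp w) * exp ((1 - β) * w) *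
        (-(exp (-(α * w)) * t)) ^ k) =
      2 * Real.pi * I * ((-t) ^ k * (Gamma (β + α * k))⁻¹) := by
  have hfun (w : ℂ) : exp (exp w) * exp ((1 - β) * w) * (-(exp (-(α * w)) * t)) ^ k =
      (-t) ^ k * (exp (exp w) * exp ((1 - (β + α * k)) * w)) := by
    rw [show (1 - (β + α * k)) * w = (1 - β) * w + k * -(α * w) by ring, exp_add, exp_nat_mul]
    ring
  simp only [hfun]
  rw [hankelIntegral_const_mul, hankelIntegral_exp hθ hθ', sub_sub_cancel]
  ring

theorem hankelIntegral_prabhakarIntegrand_of_lt (hθ : Real.pi / 2 < θ) (hθ' : θ ≤ Real.pi)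
    (hα : 0 ≤ α) (ht : Real.exp (-(α * ρ)) * |t| < 1) :
    hankelIntegral θ ρ (prabhakarIntegrand α β γ t) =
      2 * Real.pi * I * prabhakarR α β γ (-t) := by
  have hseries := hasSum_integral_mul_one_sub_cpow_neg γ
    (integrable_hankelDir_mul (f := fun w => exp (exp w) * exp ((1 - β) * w))
      (by linarith [pi_pos]) (cos_neg_of_pi_div_two_lt_of_le_pi hθ hθ') ρ (by fun_prop)
      fun w _ => norm_exp_exp_mul_exp_mul_le (le_refl ‖(1 - β : ℂ)‖))
    (Continuous.aestronglyMeasurable (by fun_prop))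
    (norm_neg_exp_neg_hankelPath_mul_le hα θ ρ t) (by positivity) ht
  have hterm (k : ℕ) : ∫ τ, hankelDir θ τ *
      (exp (exp (hankelPath θ ρ τ)) * exp ((1 - β) * hankelPath θ ρ τ)) *
        (-(exp (-(α * hankelPath θ ρ τ)) * t)) ^ k =
      2 * Real.pi * I * ((-t) ^ k * (Gamma (β + α * k))⁻¹) := by
    simpa only [hankelIntegral, mul_assoc] using hankelIntegral_exp_mul_pow hθ hθ' α β ρ t k
  simp only [hterm, sub_neg_eq_add] at hseries
  calc hankelIntegral θ ρ (prabhakarIntegrand α β γ t)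
      = ∑' k : ℕ, (poch γ k / k.factorial : ℝ) *
          (2 * Real.pi * I * ((-t) ^ k * (Gamma (β + α * k))⁻¹)) := by
        rw [hseries.tsum_eq]
        simp only [hankelIntegral, prabhakarIntegrand, mul_assoc]
    _ = 2 * Real.pi * I * prabhakarR α β γ (-t) := by
        simp only [mul_left_comm _ (2 * Real.pi * I), tsum_mul_left, ofReal_prabhakarR, ofReal_neg]

theorem re_exp_neg_mul_pos {w : ℂ} (hα : 0 ≤ α) (hαθ : α * θ < Real.pi / 2) (hw : |w.im| ≤ θ) :
    0 < (exp (-(α * w))).re := by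
  have him : |α * w.im| < Real.pi / 2 := by
    rw [abs_mul, abs_of_nonneg hα]
    exact (mul_le_mul_of_nonneg_left hw hα).trans_lt hαθ
  rw [exp_re, neg_im, im_ofReal_mul, Real.cos_neg]
  exact mul_pos (Real.exp_pos _) (Real.cos_pos_of_mem_Ioo (abs_lt.1 him))

theorem one_le_re_one_add_mul {c : ℂ} (hc : 0 ≤ c.re) (ht : 0 ≤ t) : 1 ≤ (1 + c * t).re := by
  rw [add_re, one_re, re_mul_ofReal]
  exact le_add_of_nonneg_right (mul_nonneg hc ht)

theorem differentiableOn_prabhakarIntegrand (hα : 0 ≤ α) (hαθ : α * θ < Real.pi / 2)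
    (β γ : ℝ) (ht : 0 ≤ t) :
    DifferentiableOn ℂ (prabhakarIntegrand α β γ t) {w | |w.im| ≤ θ} := by
  have hslit (w : ℂ) (hw : |w.im| ≤ θ) : 1 + exp (-(α * w)) * t ∈ slitPlane :=
    .inl (one_pos.trans_le (one_le_re_one_add_mul (re_exp_neg_mul_pos hα hαθ hw).le ht))
  unfold prabhakarIntegrand
  exact .mul (by fun_prop) (.mul (by fun_prop) (.cpow_const (by fun_prop) hslit))

theorem norm_prabhakarIntegrand_le (hα : 0 ≤ α) (hαθ : α * θ < Real.pi / 2) (hγ : 0 ≤ γ)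
    (ht : 0 ≤ t) {w : ℂ} (hw : |w.im| ≤ θ) :
    ‖prabhakarIntegrand α β γ t w‖ ≤ 1 * Real.exp ((exp w).re + ‖(1 - β : ℂ)‖ * ‖w‖) := by
  have hpow : ‖(1 + exp (-(α * w)) * t) ^ (-(γ : ℂ))‖ ≤ 1 := by
    rw [← ofReal_neg, norm_cpow_real]
    exact Real.rpow_le_one_of_one_le_of_nonpos ((one_le_re_one_add_mul
      (re_exp_neg_mul_pos hα hαθ hw).le ht).trans (re_le_norm _)) (by linarith)
  refine norm_exp_exp_mul_le
    (g := fun w => exp ((1 - β) * w) * (1 + exp (-(α * w)) * t) ^ (-(γ : ℂ))) ?_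
  rw [norm_mul, one_mul]
  exact (mul_le_of_le_one_right (norm_nonneg _) hpow).trans (norm_exp_mul_le _ _)

theorem hankelIntegral_prabhakarIntegrand (hθ : Real.pi / 2 < θ) (hθ' : θ ≤ Real.pi)
    (hα : 0 < α) (hαθ : α * θ < Real.pi / 2) (hγ : 0 ≤ γ) (ht : 0 ≤ t) (ρ : ℝ) :
    hankelIntegral θ ρ (prabhakarIntegrand α β γ t) =
      2 * Real.pi * I * prabhakarR α β γ (-t) := by
  have hlim : Tendsto (fun ρ' => Real.exp (-(α * ρ')) * |t|) atTop (𝓝 0) := by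
    simpa using (Real.tendsto_exp_neg_atTop_nhds_zero.comp
      (tendsto_id.const_mul_atTop hα)).mul_const |t|
  obtain ⟨ρ', hρ'⟩ := (hlim.eventually_lt_const one_pos).exists
  rw [← hankelIntegral_prabhakarIntegrand_of_lt hθ hθ' hα.le hρ']
  exact hankelIntegral_eq_hankelIntegral (by linarith [pi_pos])
    (cos_neg_of_pi_div_two_lt_of_le_pi hθ hθ')
    (differentiableOn_prabhakarIntegrand hα.le hαθ β γ ht)
    (fun w hw => norm_prabhakarIntegrand_le hα.le hαθ hγ ht hw) ρ ρ'

end HankelRepresentation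

section MellinTransform

variable {α β γ θ : ℝ} {s : ℂ}

theorem norm_mul_one_add_le {c : ℂ} (hc : 0 ≤ c.re) (hc₁ : ‖c‖ ≤ 1) {t : ℝ} (ht : 0 ≤ t) :
    ‖c‖ * (1 + t) ≤ √2 * ‖1 + c * t‖ := by
  have hexpand : ‖1 + c * t‖ ^ 2 = 1 + 2 * (c.re * t) + ‖c‖ ^ 2 * t ^ 2 := by
    rw [Complex.sq_norm, Complex.sq_norm, normSq_apply, normSq_apply]
    simp only [add_re, one_re, mul_re, ofReal_re, ofReal_im, mul_zero, sub_zero, add_im, one_im,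
      mul_im, zero_add]
    ring
  refine le_of_sq_le_sq ?_ (by positivity)
  rw [mul_pow, mul_pow, Real.sq_sqrt zero_le_two, hexpand]
  nlinarith [mul_nonneg hc ht, sq_nonneg (‖c‖ * (1 - t)), norm_nonneg c]

theorem norm_one_add_mul_cpow_neg_le {c : ℂ} (hc : 0 < c.re) (hc₁ : ‖c‖ ≤ 1) (hγ : 0 ≤ γ) {t : ℝ}
    (ht : 0 ≤ t) :
    ‖(1 + c * t) ^ (-(γ : ℂ))‖ ≤ √2 ^ γ * (‖c‖ ^ (-γ) * (1 + t) ^ (-γ)) := by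
  have hc₀ : 0 < ‖c‖ := hc.trans_le (re_le_norm c)
  have hlower : ‖c‖ * (1 + t) / √2 ≤ ‖1 + c * t‖ :=
    (div_le_iff₀' (by positivity)).2 (norm_mul_one_add_le hc.le hc₁ ht)
  rw [← ofReal_neg, norm_cpow_real]
  refine (Real.rpow_le_rpow_of_nonpos (by positivity) hlower (by linarith)).trans_eq ?_
  rw [Real.div_rpow (by positivity) (by positivity), Real.mul_rpow hc₀.le (by positivity),
    Real.rpow_neg (Real.sqrt_nonneg 2), div_inv_eq_mul, mul_comm]

theorem integrableOn_rpow_mul_one_add_rpow_neg {σ : ℝ} (hσ : 0 < σ) (hσγ : σ < γ) :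
    IntegrableOn (fun t : ℝ => t ^ (σ - 1) * (1 + t) ^ (-γ)) (Ioi 0) := by
  have hbeta := (hasMellin_one_add_mul_cpow_neg (c := 1) (g := γ) (s := σ) (by simp) hσ hσγ).1.norm
  refine IntegrableOn.congr_fun hbeta (fun t (ht : 0 < t) => ?_) measurableSet_Ioi
  have hone : (1 + 1 * t : ℂ) = (1 + t : ℝ) := by push_cast; ring
  dsimp only
  rw [norm_smul, hone, norm_cpow_eq_rpow_re_of_pos ht, norm_cpow_eq_rpow_re_of_pos (by positivity)]
  simp

theorem norm_prabhakarIntegrand_le_mul_one_add_rpow (hα : 0 ≤ α) (hαθ : α * θ < Real.pi / 2)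
    (hγ : 0 ≤ γ) {t : ℝ} (ht : 0 ≤ t) {w : ℂ} (hw : |w.im| ≤ θ) (hw₀ : 0 ≤ w.re) :
    ‖prabhakarIntegrand α β γ t w‖ ≤ (1 + t) ^ (-γ) *
      (√2 ^ γ * Real.exp ((exp w).re + (‖(1 - β : ℂ)‖ + α * γ) * ‖w‖)) := by
  have hnorm : ‖exp (-(α * w))‖ = Real.exp (-(α * w.re)) := by
    rw [norm_exp, neg_re, re_ofReal_mul]
  have hle_one : ‖exp (-(α * w))‖ ≤ 1 := by
    rw [hnorm, Real.exp_le_one_iff, neg_nonpos]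
    exact mul_nonneg hα hw₀
  have hgrowth : ‖exp (-(α * w))‖ ^ (-γ) ≤ Real.exp (α * γ * ‖w‖) := by
    rw [hnorm, ← Real.exp_mul, neg_mul_neg, mul_right_comm]
    gcongr
    exact re_le_norm w
  have hpow := norm_one_add_mul_cpow_neg_le (re_exp_neg_mul_pos hα hαθ hw) hle_one hγ ht
  have hfactor : ‖exp ((1 - β) * w) * (1 + exp (-(α * w)) * t) ^ (-(γ : ℂ))‖ ≤
      (1 + t) ^ (-γ) * √2 ^ γ * Real.exp ((‖(1 - β : ℂ)‖ + α * γ) * ‖w‖) := by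
    calc ‖exp ((1 - β) * w) * (1 + exp (-(α * w)) * t) ^ (-(γ : ℂ))‖
        ≤ Real.exp (‖(1 - β : ℂ)‖ * ‖w‖) *
            (√2 ^ γ * (Real.exp (α * γ * ‖w‖) * (1 + t) ^ (-γ))) := by
          rw [norm_mul]
          refine mul_le_mul (norm_exp_mul_le _ _) (hpow.trans ?_) (norm_nonneg _) (by positivity)
          gcongr
      _ = (1 + t) ^ (-γ) * √2 ^ γ * Real.exp ((‖(1 - β : ℂ)‖ + α * γ) * ‖w‖) := by
          rw [add_mul, Real.exp_add]
          ring
  rw [← mul_assoc]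
  exact norm_exp_exp_mul_le
    (g := fun w => exp ((1 - β) * w) * (1 + exp (-(α * w)) * t) ^ (-(γ : ℂ))) hfactor

theorem integrable_prabhakarKernel (hθ : 0 ≤ θ) (hcos : Real.cos θ < 0) (hα : 0 ≤ α)
    (hαθ : α * θ < Real.pi / 2) (hs : 0 < s.re) (hsγ : s.re < γ) :
    Integrable (fun p : ℝ × ℝ => (p.1 : ℂ) ^ (s - 1) •
        (hankelDir θ p.2 * prabhakarIntegrand α β γ p.1 (hankelPath θ 0 p.2)))
      ((volume.restrict (Ioi 0)).prod volume) := by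
  have hmeas : Measurable (fun p : ℝ × ℝ => (p.1 : ℂ) ^ (s - 1) •
      (hankelDir θ p.2 * prabhakarIntegrand α β γ p.1 (hankelPath θ 0 p.2))) := by
    unfold prabhakarIntegrand
    fun_prop
  refine ((integrableOn_rpow_mul_one_add_rpow_neg hs hsγ).mul_prod
    ((integrable_exp_hankelPath hθ hcos 0 (‖(1 - β : ℂ)‖ + α * γ)).const_mul (√2 ^ γ))).mono'
    hmeas.aestronglyMeasurable ?_
  have hpos : ∀ᵐ p : ℝ × ℝ ∂(volume.restrict (Ioi 0)).prod volume, p.1 ∈ Ioi 0 :=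
    Measure.quasiMeasurePreserving_fst.ae (ae_restrict_mem measurableSet_Ioi)
  filter_upwards [hpos] with p (hp : 0 < p.1)
  rw [norm_smul, norm_mul, norm_hankelDir, one_mul, norm_cpow_eq_rpow_re_of_pos hp, sub_re, one_re,
    mul_assoc]
  gcongr
  exact norm_prabhakarIntegrand_le_mul_one_add_rpow hα hαθ (hs.trans hsγ).le hp.le
    (abs_hankelPath_im_le hθ 0 p.2) (le_hankelPath_re θ 0 p.2)

theorem exp_neg_mul_cpow_neg {w : ℂ} (hα : 0 ≤ α) (hαθ : α * θ < Real.pi) (hw : |w.im| ≤ θ) :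
    exp (-(α * w)) ^ (-s) = exp (α * s * w) := by
  have him : |(-(α * w)).im| < Real.pi := by
    rw [neg_im, im_ofReal_mul, abs_neg, abs_mul, abs_of_nonneg hα]
    exact (mul_le_mul_of_nonneg_left hw hα).trans_lt hαθ
  rw [cpow_def_of_ne_zero (exp_ne_zero _), log_exp (abs_lt.1 him).1 (abs_lt.1 him).2.le]
  ring_nf

theorem mellin_prabhakarIntegrand (hα : 0 ≤ α) (hαθ : α * θ < Real.pi / 2) (hs : 0 < s.re)
    (hsγ : s.re < γ) {w : ℂ} (hw : |w.im| ≤ θ) :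
    mellin (fun t => prabhakarIntegrand α β γ t w) s =
      Gamma s * Gamma (γ - s) / Gamma γ *
        (exp (exp w) * exp ((1 - (β - α * s)) * w)) := by
  unfold prabhakarIntegrand
  simp only [← smul_eq_mul (exp (exp w)), ← smul_eq_mul (exp ((1 - β) * w))]
  rw [mellin_const_smul, mellin_const_smul, (hasMellin_one_add_mul_cpow_neg
    (re_exp_neg_mul_pos hα hαθ hw) hs hsγ).2, exp_neg_mul_cpow_neg hα (by linarith [pi_pos]) hw,
    show (1 - (β - α * s)) * w = (1 - β) * w + α * s * w by ring, exp_add, smul_eq_mul,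
    smul_eq_mul]
  ring

theorem integral_mellin_prabhakarIntegrand (hθ : Real.pi / 2 < θ) (hθ' : θ ≤ Real.pi)
    (hα : 0 ≤ α) (hαθ : α * θ < Real.pi / 2) (hs : 0 < s.re) (hsγ : s.re < γ) :
    ∫ τ, mellin (fun t => hankelDir θ τ * prabhakarIntegrand α β γ t (hankelPath θ 0 τ)) s =
      2 * Real.pi * I *
        (Gamma s * Gamma (γ - s) / (Gamma γ * Gamma (β - α * s))) := by
  have hmellin (τ : ℝ) :
      mellin (fun t => hankelDir θ τ * prabhakarIntegrand α β γ t (hankelPath θ 0 τ)) s =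
        hankelDir θ τ * (Gamma s * Gamma (γ - s) / Gamma γ * (exp (exp (hankelPath θ 0 τ)) *
          exp ((1 - (β - α * s)) * hankelPath θ 0 τ))) := by
    rw [← mellin_prabhakarIntegrand hα hαθ hs hsγ
      (abs_hankelPath_im_le (by linarith [pi_pos]) 0 τ)]
    exact mellin_const_smul _ _ (hankelDir θ τ)
  calc ∫ τ, mellin (fun t => hankelDir θ τ * prabhakarIntegrand α β γ t (hankelPath θ 0 τ)) s
      = hankelIntegral θ 0 fun w => Gamma s * Gamma (γ - s) / Gamma γ *
          (exp (exp w) * exp ((1 - (β - α * s)) * w)) := integral_congr_ae (.of_forall hmellin)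
    _ = 2 * Real.pi * I * (Gamma s * Gamma (γ - s) / (Gamma γ * Gamma (β - α * s))) := by
        rw [hankelIntegral_const_mul, hankelIntegral_exp hθ hθ', sub_sub_cancel]
        ring

theorem exists_hankel_angle (hα : 0 < α) (hα₁ : α < 1) :
    ∃ θ, Real.pi / 2 < θ ∧ θ ≤ Real.pi ∧ α * θ < Real.pi / 2 := by
  have hlt : Real.pi / 2 < min Real.pi (Real.pi / 2 / α) :=
    lt_min (half_lt_self pi_pos) ((lt_div_iff₀' hα).2 (mul_lt_of_lt_one_left (half_pos pi_pos) hα₁))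
  obtain ⟨θ, hθ, hθ'⟩ := exists_between hlt
  refine ⟨θ, hθ, (lt_min_iff.1 hθ').1.le, ?_⟩
  exact (lt_div_iff₀' hα).1 (lt_min_iff.1 hθ').2

theorem prabhakar_mellin_general (hα₀ : 0 < α) (hα₁ : α < 1) (hs₀ : 0 < s.re) (hsγ : s.re < γ) :
    HasMellin (fun t : ℝ => (prabhakarR α β γ (-t) : ℂ)) s
      (Gamma s * Gamma (γ - s) / (Gamma γ * Gamma (β - α * s))) := by
  obtain ⟨θ, hθ, hθ', hαθ⟩ := exists_hankel_angle hα₀ hα₁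
  have hrep : EqOn (fun t => hankelIntegral θ 0 (prabhakarIntegrand α β γ t))
      (fun t => 2 * Real.pi * I * prabhakarR α β γ (-t)) (Ioi 0) := fun t (ht : 0 < t) =>
    hankelIntegral_prabhakarIntegrand hθ hθ' hα₀ hαθ (hs₀.trans hsγ).le ht.le 0
  have hswap : HasMellin (fun t => hankelIntegral θ 0 (prabhakarIntegrand α β γ t)) s
      (2 * Real.pi * I * (Gamma s * Gamma (γ - s) / (Gamma γ * Gamma (β - α * s)))) := by
    rw [← integral_mellin_prabhakarIntegrand hθ hθ' hα₀.le hαθ hs₀ hsγ]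
    exact hasMellin_integral (integrable_prabhakarKernel (by linarith [pi_pos])
      (cos_neg_of_pi_div_two_lt_of_le_pi hθ hθ') hα₀.le hαθ hs₀ hsγ)
  rw [← inv_mul_cancel_left₀ two_pi_I_ne_zero (Gamma s * _ / _)]
  exact hasMellin_of_eqOn_const_mul two_pi_I_ne_zero hrep hswap

end MellinTransform

/-- Mellin transform of the Prabhakar function:
`∫_0^∞ E_{α,β}^γ(-t) t^{s-1} dt = Γ(s)Γ(γ-s)/(Γ(γ)Γ(β-αs))` for `0 < Re s < γ` and
`0 < α < 1`, `0 < αγ ≤ β ≤ 1`. -/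
theorem prabhakar_mellin (α β γ : ℝ) (s : ℂ)
    (hα0 : 0 < α) (hα1 : α < 1) (hγ : 0 < α * γ) (hγβ : α * γ ≤ β) (hβ : β ≤ 1)
    (hs0 : 0 < s.re) (hsγ : s.re < γ) :
    ∫ t in Set.Ioi (0 : ℝ), (prabhakarR α β γ (-t) : ℂ) * (t : ℂ) ^ (s - 1) =
      Complex.Gamma s * Complex.Gamma (γ - s) /
        (Complex.Gamma γ * Complex.Gamma (β - α * s)) := by
  simpa only [mellin, smul_eq_mul, mul_comm] using (prabhakar_mellin_general hα0 hα1 hs0 hsγ).2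
end
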